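/- arXiv:2003.14191 — 6 statements merged into one kernel-verified Lean document; each statement's English description precedes it below -/
import Mathlib

section
/- Let $I \subseteq \mathbb{R}$ be an interval and let $X, V : I \to \mathbb{R}^3$ be differentiable with $X(s) \ne 0$ and $V(s) \ne 0$ for all $s \in I$, satisfying $X'(s) = V(s)/\sqrt{1+|V(s)|^2}$ and $V'(s) = \lambda(s)\, X(s)/|X(s)|$ where $\lambda : I \to [0,\infty)$. Then for every $s \in I$, $\frac{d}{ds}\Big(\frac{V(s) \cdot X(s)}{|V(s)|}\Big) = \frac{|V(s)|}{\sqrt{1+|V(s)|^2}} + \frac{|X(s)|}{|V(s)|}\Big(1 - \frac{(V(s) \cdot X(s))^2}{|V(s)|^2 |X(s)|^2}\Big)\lambda(s) \;\ge\; 0$; in particular $s \mapsto \frac{V(s)\cdot X(s)}{|V(s)|}$ is nondecreasing on $I$. -/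
open MeasureTheory Real Set
noncomputable section

abbrev E3 := EuclideanSpace ℝ (Fin 3)

/-!
`V` turns towards `X` while `X` moves along `V`, so both contributions to the derivative of the
component `⟪V, X⟫ / ‖V‖` of `X` in the direction of `V` have a sign: the motion contributes the
positive speed, and the turning a nonnegative multiple of `‖V‖ ^ 2 * ‖X‖ ^ 2 - ⟪V, X⟫ ^ 2`, which
is nonnegative by Cauchy–Schwarz. The relativistic factor enters only through its positivity.
-/

section InnerProductSpace

variable {E : Type*} [NormedAddCommGroup E] [InnerProductSpace ℝ E]

theorem inner_sq_div_norm_sq_mul_norm_sq_le_one (v x : E) :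
    inner ℝ v x ^ 2 / (‖v‖ ^ 2 * ‖x‖ ^ 2) ≤ 1 := by
  rw [← mul_pow, ← div_pow, sq_le_one_iff_abs_le_one]
  exact abs_real_inner_div_norm_mul_norm_le_one v x

variable {V X : ℝ → E} {V' X' : E} {J : Set ℝ} {s : ℝ}

theorem hasDerivWithinAt_norm (hV : HasDerivWithinAt V V' J s) (hV0 : V s ≠ 0) :
    HasDerivWithinAt (fun r => ‖V r‖) (inner ℝ (V s) V' / ‖V s‖) J s := by
  have hsqrt := hV.norm_sq.sqrt (pow_ne_zero 2 (norm_ne_zero_iff.mpr hV0))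
  simp only [Real.sqrt_sq (norm_nonneg _)] at hsqrt
  rwa [mul_div_mul_left _ _ two_ne_zero] at hsqrt

theorem hasDerivWithinAt_inner_div_norm (hV : HasDerivWithinAt V V' J s)
    (hX : HasDerivWithinAt X X' J s) (hV0 : V s ≠ 0) :
    HasDerivWithinAt (fun r => inner ℝ (V r) (X r) / ‖V r‖)
      ((inner ℝ (V s) X' + inner ℝ V' (X s)) / ‖V s‖ -
        inner ℝ (V s) (X s) * inner ℝ (V s) V' / ‖V s‖ ^ 3) J s := by
  have hnorm : ‖V s‖ ≠ 0 := norm_ne_zero_iff.mpr hV0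
  refine ((hV.inner ℝ hX).div (hasDerivWithinAt_norm hV hV0) hnorm).congr_deriv ?_
  field_simp

theorem hasDerivWithinAt_inner_div_norm_of_radial_force {μ lam : ℝ}
    (hX0 : X s ≠ 0) (hV0 : V s ≠ 0) (hX : HasDerivWithinAt X (μ • V s) J s)
    (hV : HasDerivWithinAt V (lam • (‖X s‖⁻¹ • X s)) J s) :
    HasDerivWithinAt (fun r => inner ℝ (V r) (X r) / ‖V r‖)
      (μ * ‖V s‖ + ‖X s‖ / ‖V s‖ *
        (1 - inner ℝ (V s) (X s) ^ 2 / (‖V s‖ ^ 2 * ‖X s‖ ^ 2)) * lam) J s := by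
  have hVnorm : ‖V s‖ ≠ 0 := norm_ne_zero_iff.mpr hV0
  have hXnorm : ‖X s‖ ≠ 0 := norm_ne_zero_iff.mpr hX0
  refine (hasDerivWithinAt_inner_div_norm hV hX hV0).congr_deriv ?_
  simp only [real_inner_smul_left, real_inner_smul_right, real_inner_self_eq_norm_sq]
  field_simp
  ring

theorem mul_norm_add_norm_div_norm_mul_pos {v : E} {μ lam : ℝ} (hv : v ≠ 0)
    (hμ : 0 < μ) (hlam : 0 ≤ lam) (x : E) :
    0 < μ * ‖v‖ + ‖x‖ / ‖v‖ * (1 - inner ℝ v x ^ 2 / (‖v‖ ^ 2 * ‖x‖ ^ 2)) * lam := by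
  have hsin_sq := sub_nonneg.mpr (inner_sq_div_norm_sq_mul_norm_sq_le_one v x)
  positivity

end InnerProductSpace

/- Derivatives are taken within `J ⊇ I`: `J = I` gives one-sided derivatives at the endpoints of
`I`, and `J = univ` two-sided ones. The nonrelativistic system is the case `μ = 1`. -/
theorem radial_monotonicity_general {E : Type*} [NormedAddCommGroup E] [InnerProductSpace ℝ E]
    {I J : Set ℝ} (hI : I.OrdConnected) (hIJ : I ⊆ J) {X V : ℝ → E} {μ lam : ℝ → ℝ}
    (hX0 : ∀ s ∈ I, X s ≠ 0) (hV0 : ∀ s ∈ I, V s ≠ 0)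
    (hμ : ∀ s ∈ I, 0 < μ s) (hlam : ∀ s ∈ I, 0 ≤ lam s)
    (hX : ∀ s ∈ I, HasDerivWithinAt X (μ s • V s) J s)
    (hV : ∀ s ∈ I, HasDerivWithinAt V (lam s • (‖X s‖⁻¹ • X s)) J s) :
    (∀ s ∈ I,
      HasDerivWithinAt (fun r => inner ℝ (V r) (X r) / ‖V r‖)
        (μ s * ‖V s‖ + ‖X s‖ / ‖V s‖ *
          (1 - inner ℝ (V s) (X s) ^ 2 / (‖V s‖ ^ 2 * ‖X s‖ ^ 2)) * lam s) J s ∧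
      0 < μ s * ‖V s‖ + ‖X s‖ / ‖V s‖ *
          (1 - inner ℝ (V s) (X s) ^ 2 / (‖V s‖ ^ 2 * ‖X s‖ ^ 2)) * lam s) ∧
    StrictMonoOn (fun r => inner ℝ (V r) (X r) / ‖V r‖) I := by
  have hderiv := fun s hs =>
    hasDerivWithinAt_inner_div_norm_of_radial_force (hX0 s hs) (hV0 s hs) (hX s hs) (hV s hs)
  have hpos := fun s hs =>
    mul_norm_add_norm_div_norm_mul_pos (hV0 s hs) (hμ s hs) (hlam s hs) (X s)
  refine ⟨fun s hs => ⟨hderiv s hs, hpos s hs⟩, ?_⟩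
  exact strictMonoOn_of_hasDerivWithinAt_pos hI.convex
    (fun s hs => ((hderiv s hs).mono hIJ).continuousWithinAt)
    (fun s hs => (hderiv s (interior_subset hs)).mono (interior_subset.trans hIJ))
    (fun s hs => hpos s (interior_subset hs))

/-- Monotonicity of `V⋅X/|V|` along characteristics of the radially symmetric
relativistic Vlasov–Poisson system, with the explicit (nonnegative) derivative. -/
theorem radial_monotonicity (I : Set ℝ) (hI : I.OrdConnected)
    (X V : ℝ → E3) (lam : ℝ → ℝ)
    (hX0 : ∀ s ∈ I, X s ≠ 0) (hV0 : ∀ s ∈ I, V s ≠ 0)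
    (hlam : ∀ s ∈ I, 0 ≤ lam s)
    (hX : ∀ s ∈ I, HasDerivAt X ((Real.sqrt (1 + ‖V s‖ ^ 2))⁻¹ • V s) s)
    (hV : ∀ s ∈ I, HasDerivAt V (lam s • (‖X s‖⁻¹ • X s)) s) :
    (∀ s ∈ I,
      HasDerivAt (fun r => (inner ℝ (V r) (X r) : ℝ) / ‖V r‖)
        (‖V s‖ / Real.sqrt (1 + ‖V s‖ ^ 2) +
          ‖X s‖ / ‖V s‖ *
            (1 - (inner ℝ (V s) (X s) : ℝ) ^ 2 / (‖V s‖ ^ 2 * ‖X s‖ ^ 2)) * lam s) s ∧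
      0 ≤ ‖V s‖ / Real.sqrt (1 + ‖V s‖ ^ 2) +
          ‖X s‖ / ‖V s‖ *
            (1 - (inner ℝ (V s) (X s) : ℝ) ^ 2 / (‖V s‖ ^ 2 * ‖X s‖ ^ 2)) * lam s) ∧
    MonotoneOn (fun r => (inner ℝ (V r) (X r) : ℝ) / ‖V r‖) I := by
  have h := radial_monotonicity_general hI (subset_univ I) hX0 hV0 (fun s _ => by positivity) hlam
    (fun s hs => (hX s hs).hasDerivWithinAt) (fun s hs => (hV s hs).hasDerivWithinAt)
  simp only [inv_mul_eq_div, hasDerivWithinAt_univ] at h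
  exact ⟨fun s hs => (h.1 s hs).imp_right le_of_lt, h.2.monotoneOn⟩
end
end

section
/- Let $\tau < T$ and let $X, V : [\tau, T] \to \mathbb{R}^3$ be $C^1$ with $X(s) \ne 0$ and $V(s) \ne 0$ for all $s$, satisfying $X'(s) = V(s)/\sqrt{1+|V(s)|^2}$ and $V'(s) = \lambda(s)\, X(s)/|X(s)|$ with $\lambda : [\tau,T] \to [0,\infty)$ continuous. Assume $V(\tau) \cdot X(\tau) \ge 0$ and set $c := |V(\tau)|/\sqrt{1+|V(\tau)|^2}$. Then for every $s \in [\tau, T]$: (i) $V(s) \cdot X(s) \ge 0$ and $|V(s)| \ge |V(\tau)|$; (ii) $\frac{V(s)\cdot X(s)}{|V(s)|} \ge c\,(s-\tau)$; (iii) $|X(s)|^2 \ge |X(\tau)|^2 + c^2 (s-\tau)^2$. -/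
open MeasureTheory Real Set
noncomputable section

/-!
With `m(r) = 1 / √(1 + r²)` and `μ = λ / |X|` the characteristics solve `X' = m(|V|) V`, `V' = μ X`,
where `μ ≥ 0`. The radial momentum satisfies `(V · X)' = m(|V|) |V|² + μ |X|² ≥ 0`, so it stays
nonnegative, and hence `(|V|²)' = 2 μ V · X ≥ 0`. Since `r m(r)` is nondecreasing, the speed
`|V| m(|V|)` therefore stays above its initial value `c`. Moreover
`(V · X / |V|)' = |V| m(|V|) + μ (|V|² |X|² - (V · X)²) / |V|³`,
whose last term is nonnegative by Cauchy–Schwarz, so `V · X / |V| ≥ c (s - τ)`; and integrating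
`(|X|²)' = 2 (|V| m(|V|)) (V · X / |V|) ≥ 2 c² (s - τ)` gives the growth of `|X|²`.
-/

section

open scoped RealInnerProductSpace

theorem le_on_Icc_of_hasDerivWithinAt_le {f g f' g' : ℝ → ℝ} {a b : ℝ}
    (hf : ∀ s ∈ Icc a b, HasDerivWithinAt f (f' s) (Icc a b) s)
    (hg : ∀ s ∈ Icc a b, HasDerivWithinAt g (g' s) (Icc a b) s)
    (ha : f a ≤ g a) (hle : ∀ s ∈ Icc a b, f' s ≤ g' s) {s : ℝ} (hs : s ∈ Icc a b) :
    f s ≤ g s :=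
  image_le_of_deriv_right_le_deriv_boundary
    (fun t ht => (hf t ht).continuousWithinAt)
    (fun t ht => (hf t (Ico_subset_Icc_self ht)).mono_of_mem_nhdsWithin (Icc_mem_nhdsGE_of_mem ht))
    ha
    (fun t ht => (hg t ht).continuousWithinAt)
    (fun t ht => (hg t (Ico_subset_Icc_self ht)).mono_of_mem_nhdsWithin (Icc_mem_nhdsGE_of_mem ht))
    (fun t ht => hle t (Ico_subset_Icc_self ht)) hs

theorem strictMono_div_sqrt_one_add_sq : StrictMono fun r : ℝ => r / √(1 + r ^ 2) := by
  simpa only [sin_arctan] using sin_arctan_strictMono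

variable {E : Type*} [NormedAddCommGroup E] [InnerProductSpace ℝ E]

theorem hasDerivWithinAt_norm_of_ne_zero {f : ℝ → E} {f' : E} {s : Set ℝ} {x : ℝ}
    (hf : HasDerivWithinAt f f' s x) (hx : f x ≠ 0) :
    HasDerivWithinAt (fun t => ‖f t‖) (⟪f x, f'⟫ / ‖f x‖) s x := by
  have h := hf.norm_sq.sqrt (pow_ne_zero 2 (norm_ne_zero_iff.2 hx))
  simp only [sqrt_sq (norm_nonneg _)] at h
  exact h.congr_deriv (mul_div_mul_left _ _ two_ne_zero)

/-- Motion on `[a, b]` with position `X` and momentum `V` in a central force field: `V' = μ X`, and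
the velocity is `X' = m(|V|) V`, so that the speed is `|V| m(|V|)`. The force is written `μ X`
rather than `lam X / |X|` so that it also makes sense at the origin; it points outward when
`0 ≤ μ`. Relativistic motion is the case `m r = (√(1 + r ^ 2))⁻¹`. -/
structure IsCentralMotion (m μ : ℝ → ℝ) (a b : ℝ) (X V : ℝ → E) : Prop where
  position : ∀ s ∈ Icc a b, HasDerivWithinAt X (m ‖V s‖ • V s) (Icc a b) s
  momentum : ∀ s ∈ Icc a b, HasDerivWithinAt V (μ s • X s) (Icc a b) s

namespace IsCentralMotion

variable {m μ : ℝ → ℝ} {a b s : ℝ} {X V : ℝ → E}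

theorem hasDerivWithinAt_inner (h : IsCentralMotion m μ a b X V) (hs : s ∈ Icc a b) :
    HasDerivWithinAt (fun t => ⟪V t, X t⟫)
      (‖V s‖ * m ‖V s‖ * ‖V s‖ + μ s * ‖X s‖ ^ 2) (Icc a b) s := by
  refine ((h.momentum s hs).inner ℝ (h.position s hs)).congr_deriv ?_
  rw [real_inner_smul_left, real_inner_smul_right, real_inner_self_eq_norm_sq,
    real_inner_self_eq_norm_sq]
  ring

theorem hasDerivWithinAt_norm_position_sq (h : IsCentralMotion m μ a b X V) (hs : s ∈ Icc a b) :
    HasDerivWithinAt (fun t => ‖X t‖ ^ 2) (2 * (m ‖V s‖ * ⟪V s, X s⟫)) (Icc a b) s := by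
  simpa only [real_inner_smul_right, real_inner_comm] using (h.position s hs).norm_sq

theorem hasDerivWithinAt_norm_momentum_sq (h : IsCentralMotion m μ a b X V) (hs : s ∈ Icc a b) :
    HasDerivWithinAt (fun t => ‖V t‖ ^ 2) (2 * (μ s * ⟪V s, X s⟫)) (Icc a b) s := by
  simpa only [real_inner_smul_right] using (h.momentum s hs).norm_sq

theorem hasDerivWithinAt_inner_div_norm (h : IsCentralMotion m μ a b X V) (hs : s ∈ Icc a b)
    (hV : V s ≠ 0) :
    HasDerivWithinAt (fun t => ⟪V t, X t⟫ / ‖V t‖)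
      (‖V s‖ * m ‖V s‖ + μ s * ((‖V s‖ * ‖X s‖) ^ 2 - ⟪V s, X s⟫ ^ 2) / ‖V s‖ ^ 3)
      (Icc a b) s := by
  have hV' : ‖V s‖ ≠ 0 := norm_ne_zero_iff.2 hV
  refine ((h.hasDerivWithinAt_inner hs).fun_div
    (hasDerivWithinAt_norm_of_ne_zero (h.momentum s hs) hV) hV').congr_deriv ?_
  rw [real_inner_smul_right]
  field_simp
  ring

theorem inner_nonneg (h : IsCentralMotion m μ a b X V)
    (hm : ∀ s ∈ Icc a b, 0 ≤ ‖V s‖ * m ‖V s‖) (hμ : ∀ s ∈ Icc a b, 0 ≤ μ s)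
    (ha : 0 ≤ ⟪V a, X a⟫) (hs : s ∈ Icc a b) : 0 ≤ ⟪V s, X s⟫ :=
  le_on_Icc_of_hasDerivWithinAt_le (fun t _ => hasDerivWithinAt_const t _ 0)
    (fun _ ht => h.hasDerivWithinAt_inner ht) ha
    (fun t ht => add_nonneg (mul_nonneg (hm t ht) (norm_nonneg _))
      (mul_nonneg (hμ t ht) (sq_nonneg _))) hs

theorem norm_momentum_le (h : IsCentralMotion m μ a b X V) (hμ : ∀ s ∈ Icc a b, 0 ≤ μ s)
    (hVX : ∀ s ∈ Icc a b, 0 ≤ ⟪V s, X s⟫) (hs : s ∈ Icc a b) : ‖V a‖ ≤ ‖V s‖ := by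
  refine (sq_le_sq₀ (norm_nonneg _) (norm_nonneg _)).1 ?_
  exact le_on_Icc_of_hasDerivWithinAt_le (fun t _ => hasDerivWithinAt_const t _ (‖V a‖ ^ 2))
    (fun _ ht => h.hasDerivWithinAt_norm_momentum_sq ht) le_rfl
    (fun t ht => mul_nonneg zero_le_two (mul_nonneg (hμ t ht) (hVX t ht))) hs

theorem mul_sub_le_inner_div_norm {c : ℝ} (h : IsCentralMotion m μ a b X V)
    (hμ : ∀ s ∈ Icc a b, 0 ≤ μ s) (hV : ∀ s ∈ Icc a b, V s ≠ 0)
    (hc : ∀ s ∈ Icc a b, c ≤ ‖V s‖ * m ‖V s‖) (ha : 0 ≤ ⟪V a, X a⟫) (hs : s ∈ Icc a b) :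
    c * (s - a) ≤ ⟪V s, X s⟫ / ‖V s‖ := by
  refine le_on_Icc_of_hasDerivWithinAt_le
    (fun t _ => ((hasDerivWithinAt_id t _).sub_const a).const_mul c)
    (fun t ht => h.hasDerivWithinAt_inner_div_norm ht (hV t ht)) ?_ (fun t ht => ?_) hs
  · simpa only [id_eq, sub_self, mul_zero] using div_nonneg ha (norm_nonneg (V a))
  · have cauchy_schwarz : ⟪V t, X t⟫ ^ 2 ≤ (‖V t‖ * ‖X t‖) ^ 2 :=
      sq_le_sq.2 ((abs_real_inner_le_norm _ _).trans (le_abs_self _))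
    rw [mul_one]
    exact le_add_of_le_of_nonneg (hc t ht) (div_nonneg
      (mul_nonneg (hμ t ht) (sub_nonneg.2 cauchy_schwarz)) (pow_nonneg (norm_nonneg _) 3))

theorem norm_position_sq_add_le {c : ℝ} (h : IsCentralMotion m μ a b X V) (hc₀ : 0 ≤ c)
    (hc : ∀ s ∈ Icc a b, c ≤ ‖V s‖ * m ‖V s‖)
    (hVX : ∀ s ∈ Icc a b, c * (s - a) ≤ ⟪V s, X s⟫ / ‖V s‖) (hs : s ∈ Icc a b) :
    ‖X a‖ ^ 2 + c ^ 2 * (s - a) ^ 2 ≤ ‖X s‖ ^ 2 := by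
  have lower_deriv (t : ℝ) : HasDerivWithinAt (fun t => ‖X a‖ ^ 2 + c ^ 2 * (t - a) ^ 2)
      (2 * (c * (c * (t - a)))) (Icc a b) t := by
    refine (((((hasDerivWithinAt_id t _).sub_const a).fun_pow 2).const_mul
      (c ^ 2)).const_add (‖X a‖ ^ 2)).congr_deriv ?_
    simp only [id_eq, Nat.cast_ofNat, Nat.add_one_sub_one]
    ring
  have deriv_le : ∀ t ∈ Icc a b, c * (c * (t - a)) ≤ m ‖V t‖ * ⟪V t, X t⟫ := fun t ht => calc
    c * (c * (t - a)) ≤ ‖V t‖ * m ‖V t‖ * (⟪V t, X t⟫ / ‖V t‖) :=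
      mul_le_mul (hc t ht) (hVX t ht) (mul_nonneg hc₀ (sub_nonneg.2 ht.1)) (hc₀.trans (hc t ht))
    _ = m ‖V t‖ * ⟪V t, X t⟫ := by
      obtain hV | hV := eq_or_ne (V t) 0
      · simp [hV]
      · field_simp
  exact le_on_Icc_of_hasDerivWithinAt_le (fun t _ => lower_deriv t)
    (fun t ht => h.hasDerivWithinAt_norm_position_sq ht) (by simp)
    (fun t ht => mul_le_mul_of_nonneg_left (deriv_le t ht) zero_le_two) hs

end IsCentralMotion

theorem outgoing_characteristics_general {m μ : ℝ → ℝ} {τ T : ℝ} {X V : ℝ → E}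
    (h : IsCentralMotion m μ τ T X V) (hm : MonotoneOn (fun r => r * m r) (Ici 0))
    (hμ : ∀ s ∈ Icc τ T, 0 ≤ μ s) (hVτ : V τ ≠ 0) (hinit : 0 ≤ ⟪V τ, X τ⟫) :
    ∀ s ∈ Icc τ T,
      (0 ≤ ⟪V s, X s⟫ ∧ ‖V τ‖ ≤ ‖V s‖) ∧
      ‖V τ‖ * m ‖V τ‖ * (s - τ) ≤ ⟪V s, X s⟫ / ‖V s‖ ∧
      ‖X τ‖ ^ 2 + (‖V τ‖ * m ‖V τ‖) ^ 2 * (s - τ) ^ 2 ≤ ‖X s‖ ^ 2 := by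
  have speed_nonneg : ∀ r, 0 ≤ r → 0 ≤ r * m r := fun r hr => by
    simpa only [zero_mul] using hm self_mem_Ici hr hr
  have inner_nonneg : ∀ s ∈ Icc τ T, 0 ≤ ⟪V s, X s⟫ :=
    fun s hs => h.inner_nonneg (fun _ _ => speed_nonneg _ (norm_nonneg _)) hμ hinit hs
  have norm_le : ∀ s ∈ Icc τ T, ‖V τ‖ ≤ ‖V s‖ :=
    fun s hs => h.norm_momentum_le hμ inner_nonneg hs
  have speed_le : ∀ s ∈ Icc τ T, ‖V τ‖ * m ‖V τ‖ ≤ ‖V s‖ * m ‖V s‖ :=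
    fun s hs => hm (norm_nonneg _) (norm_nonneg _) (norm_le s hs)
  have ne_zero : ∀ s ∈ Icc τ T, V s ≠ 0 :=
    fun s hs => norm_pos_iff.1 ((norm_pos_iff.2 hVτ).trans_le (norm_le s hs))
  have le_inner_div_norm : ∀ s ∈ Icc τ T, ‖V τ‖ * m ‖V τ‖ * (s - τ) ≤ ⟪V s, X s⟫ / ‖V s‖ :=
    fun s hs => h.mul_sub_le_inner_div_norm hμ ne_zero speed_le hinit hs
  exact fun s hs => ⟨⟨inner_nonneg s hs, norm_le s hs⟩, le_inner_div_norm s hs,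
    h.norm_position_sq_add_le (speed_nonneg _ (norm_nonneg _)) speed_le le_inner_div_norm hs⟩

end

/-- Quantitative outgoing-particle estimate: once the radial momentum `V⋅X` is
nonnegative under a radially outward force, the speed never decreases, the normalized
radial momentum grows at least linearly, and the particle escapes the origin. -/
theorem outgoing_characteristics (τ T : ℝ) (hτT : τ < T)
    (X V : ℝ → E3) (lam : ℝ → ℝ)
    (hX0 : ∀ s ∈ Set.Icc τ T, X s ≠ 0) (hV0 : ∀ s ∈ Set.Icc τ T, V s ≠ 0)
    (hlam_cont : ContinuousOn lam (Set.Icc τ T))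
    (hlam : ∀ s ∈ Set.Icc τ T, 0 ≤ lam s)
    (hX : ∀ s ∈ Set.Icc τ T, HasDerivAt X ((Real.sqrt (1 + ‖V s‖ ^ 2))⁻¹ • V s) s)
    (hV : ∀ s ∈ Set.Icc τ T, HasDerivAt V (lam s • (‖X s‖⁻¹ • X s)) s)
    (hinit : 0 ≤ (inner ℝ (V τ) (X τ) : ℝ)) :
    ∀ s ∈ Set.Icc τ T,
      (0 ≤ (inner ℝ (V s) (X s) : ℝ) ∧ ‖V τ‖ ≤ ‖V s‖) ∧
      (‖V τ‖ / Real.sqrt (1 + ‖V τ‖ ^ 2)) * (s - τ) ≤ (inner ℝ (V s) (X s) : ℝ) / ‖V s‖ ∧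
      ‖X τ‖ ^ 2 + (‖V τ‖ / Real.sqrt (1 + ‖V τ‖ ^ 2)) ^ 2 * (s - τ) ^ 2 ≤ ‖X s‖ ^ 2 :=
  outgoing_characteristics_general (m := fun r => (√(1 + r ^ 2))⁻¹) (μ := fun s => lam s * ‖X s‖⁻¹)
    ⟨fun s hs => (hX s hs).hasDerivWithinAt,
      fun s hs => by simpa only [mul_smul] using (hV s hs).hasDerivWithinAt⟩
    (strictMono_div_sqrt_one_add_sq.monotone.monotoneOn _)
    (fun s hs => mul_nonneg (hlam s hs) (inv_nonneg.2 (norm_nonneg _)))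
    (hV0 τ (left_mem_Icc.2 hτT.le)) hinit
end
end

section
/- Let $\tau < T$ and let $X, V : [\tau, T] \to \mathbb{R}^3$ be $C^1$ with $X(s) \ne 0$ and $V(s) \ne 0$ for all $s$, satisfying $X'(s) = V(s)/\sqrt{1+|V(s)|^2}$ and $V'(s) = \lambda(s)\, X(s)/|X(s)|$ with $\lambda : [\tau,T] \to [0,\infty)$ continuous. Assume $V(\tau) \cdot X(\tau) \ge 0$, and that for all $s \in [\tau,T]$ one has $\lambda(s) \le \min\{B,\, C/|X(s)|^2\}$ for some constants $B, C > 0$. Set $c := |V(\tau)|/\sqrt{1+|V(\tau)|^2} > 0$. Then for every $\gamma > 0$ and every $s \in [\tau, T]$: $|V(s)| \le |V(\tau)| + B\gamma + \frac{C}{c^2 \gamma}$. -/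
open MeasureTheory Real Set
noncomputable section

/-! Let `v = V / √(1 + |V|²)` be the relativistic velocity, so that `X' = v`. An outward radial
force contributes a nonnegative multiple of `|X|² - (v · X)²` to `(v · X)'`, and this difference is
nonnegative because `|v| ≤ 1`; hence `(v · X)' ≥ |v|²`. So `V · X` stays nonnegative, `|V|` is
nondecreasing, `|v| ≥ c`, and two integrations of `(v · X)' ≥ c²` give
`|X(s)|² ≥ |X(τ)|² + c² (s - τ)²`. The force is then at most `min {B, C / (c² (s - τ)²)}`;
integrating the first bound up to time `τ + γ` and the second one afterwards gives the estimate. -/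

lemma image_le_of_hasDerivWithinAt_le {f f' g g' : ℝ → ℝ} {a b : ℝ}
    (hf : ∀ t ∈ Icc a b, HasDerivWithinAt f (f' t) (Icc a b) t)
    (hg : ∀ t ∈ Icc a b, HasDerivWithinAt g (g' t) (Icc a b) t)
    (ha : f a ≤ g a) (hle : ∀ t ∈ Icc a b, f' t ≤ g' t) {s : ℝ} (hs : s ∈ Icc a b) :
    f s ≤ g s :=
  image_le_of_deriv_right_le_deriv_boundary
    (fun t ht => (hf t ht).continuousWithinAt)
    (fun t ht => (hf t (Ico_subset_Icc_self ht)).mono_of_mem_nhdsWithin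
      (Icc_mem_nhdsGE_of_mem ht))
    ha (fun t ht => (hg t ht).continuousWithinAt)
    (fun t ht => (hg t (Ico_subset_Icc_self ht)).mono_of_mem_nhdsWithin
      (Icc_mem_nhdsGE_of_mem ht))
    (fun t ht => hle t (Ico_subset_Icc_self ht)) hs

section NormedSpace

variable {E : Type*} [NormedAddCommGroup E] [NormedSpace ℝ E] {f f' : ℝ → E}

lemma norm_image_sub_le_of_norm_deriv_le_div_sq {a b τ K : ℝ} (hτa : τ < a)
    (hf : ∀ t ∈ Icc a b, HasDerivWithinAt f (f' t) (Icc a b) t)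
    (hK : ∀ t ∈ Icc a b, ‖f' t‖ ≤ K / (t - τ) ^ 2) {s : ℝ} (hs : s ∈ Icc a b) :
    ‖f s - f a‖ ≤ K / (a - τ) - K / (s - τ) := by
  have hprimitive : ∀ t ∈ Icc a b, HasDerivWithinAt (fun r => K / (a - τ) - K / (r - τ))
      (K / (t - τ) ^ 2) (Icc a b) t := fun t ht => by
    have ht0 : t - τ ≠ 0 := by linarith [ht.1]
    refine (((hasDerivWithinAt_const t _ K).fun_div
      ((hasDerivWithinAt_id t _).sub_const τ) ht0).const_sub _).congr_deriv ?_
    simp [neg_div]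
  exact image_norm_le_of_norm_deriv_right_le_deriv_boundary'
    (fun t ht => ((hf t ht).sub_const _).continuousWithinAt)
    (fun t ht => ((hf t (Ico_subset_Icc_self ht)).sub_const _).mono_of_mem_nhdsWithin
      (Icc_mem_nhdsGE_of_mem ht))
    (by simp) (fun t ht => (hprimitive t ht).continuousWithinAt)
    (fun t ht => (hprimitive t (Ico_subset_Icc_self ht)).mono_of_mem_nhdsWithin
      (Icc_mem_nhdsGE_of_mem ht))
    (fun t ht => hK t (Ico_subset_Icc_self ht)) hs

lemma norm_image_sub_le_of_norm_deriv_le_of_le_div_sq {τ T B K γ : ℝ}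
    (hf : ∀ t ∈ Icc τ T, HasDerivWithinAt f (f' t) (Icc τ T) t)
    (hB : ∀ t ∈ Icc τ T, ‖f' t‖ ≤ B) (hK₀ : 0 ≤ K)
    (hK : ∀ t ∈ Ioc τ T, ‖f' t‖ ≤ K / (t - τ) ^ 2)
    (hγ : 0 < γ) {s : ℝ} (hs : s ∈ Icc τ T) :
    ‖f s - f τ‖ ≤ B * γ + K / γ := by
  have hB₀ : 0 ≤ B := (norm_nonneg _).trans (hB s hs)
  have hnear : ∀ t ∈ Icc τ T, ‖f t - f τ‖ ≤ B * (t - τ) :=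
    norm_image_sub_le_of_norm_deriv_le_segment' hf fun t ht => hB t (Ico_subset_Icc_self ht)
  rcases le_total s (τ + γ) with hsγ | hsγ
  · calc ‖f s - f τ‖ ≤ B * (s - τ) := hnear s hs
      _ ≤ B * γ := by gcongr; linarith
      _ ≤ B * γ + K / γ := le_add_of_nonneg_right (by positivity)
  · have hsub : Icc (τ + γ) T ⊆ Ioc τ T := fun t ht => ⟨by linarith [ht.1], ht.2⟩
    have hfar : ‖f s - f (τ + γ)‖ ≤ K / (τ + γ - τ) - K / (s - τ) :=
      norm_image_sub_le_of_norm_deriv_le_div_sq (by linarith)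
        (fun t ht => (hf t (Ioc_subset_Icc_self (hsub ht))).mono
          (hsub.trans Ioc_subset_Icc_self))
        (fun t ht => hK t (hsub ht)) ⟨hsγ, hs.2⟩
    have htail : 0 ≤ K / (s - τ) := div_nonneg hK₀ (by linarith)
    have hmid := hnear (τ + γ) ⟨by linarith, hsγ.trans hs.2⟩
    rw [add_sub_cancel_left] at hfar hmid
    linarith [norm_sub_le_norm_sub_add_norm_sub (f s) (f (τ + γ)) (f τ)]

end NormedSpace

section RelativisticVelocity

variable {E : Type*} [NormedAddCommGroup E] [InnerProductSpace ℝ E]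

/-- The velocity `p / √(1 + |p|²)` of a relativistic particle of unit mass with momentum `p`, in
units where the speed of light is `1`. In the notation of the main theorem the momentum is `V`. -/
def relVelocity (p : E) : E := (√(1 + ‖p‖ ^ 2))⁻¹ • p

lemma norm_relVelocity (p : E) : ‖relVelocity p‖ = ‖p‖ / √(1 + ‖p‖ ^ 2) := by
  rw [relVelocity, norm_smul, norm_inv, norm_of_nonneg (sqrt_nonneg _), inv_mul_eq_div]

lemma norm_relVelocity_le_one (p : E) : ‖relVelocity p‖ ≤ 1 := by
  rw [norm_relVelocity]
  exact div_le_one_of_le₀ (le_sqrt_of_sq_le (by linarith)) (sqrt_nonneg _)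

lemma norm_relVelocity_le_norm_relVelocity {p q : E} (h : ‖p‖ ≤ ‖q‖) :
    ‖relVelocity p‖ ≤ ‖relVelocity q‖ := by
  rw [norm_relVelocity, norm_relVelocity, div_le_div_iff₀ (by positivity) (by positivity)]
  refine le_of_sq_le_sq ?_ (by positivity)
  rw [mul_pow, mul_pow, sq_sqrt (by positivity), sq_sqrt (by positivity)]
  linarith [pow_le_pow_left₀ (norm_nonneg p) h 2]

lemma relVelocity_ne_zero {p : E} (hp : p ≠ 0) : relVelocity p ≠ 0 :=
  smul_ne_zero (inv_ne_zero (by positivity)) hp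

lemma inner_relVelocity_nonneg_iff {p x : E} :
    0 ≤ inner ℝ (relVelocity p) x ↔ 0 ≤ inner ℝ p x := by
  rw [relVelocity, real_inner_smul_left]
  exact mul_nonneg_iff_of_pos_left (by positivity)

lemma hasDerivWithinAt_relVelocity {p : ℝ → E} {F : E} {S : Set ℝ} {t : ℝ}
    (hp : HasDerivWithinAt p F S t) :
    HasDerivWithinAt (fun r => relVelocity (p r))
      ((√(1 + ‖p t‖ ^ 2))⁻¹ • (F - inner ℝ (relVelocity (p t)) F • relVelocity (p t))) S t := by
  have hpos : 0 < √(1 + ‖p t‖ ^ 2) := by positivity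
  refine ((((hp.norm_sq.const_add 1).sqrt (by positivity)).fun_inv hpos.ne').fun_smul
    hp).congr_deriv ?_
  simp only [relVelocity, real_inner_smul_left, smul_sub, smul_smul]
  rw [sub_eq_add_neg, ← neg_smul]
  congr 2
  field_simp

lemma hasDerivWithinAt_inner_relVelocity {p x : ℝ → E} {F : E} {S : Set ℝ} {t : ℝ}
    (hp : HasDerivWithinAt p F S t) (hx : HasDerivWithinAt x (relVelocity (p t)) S t) :
    HasDerivWithinAt (fun r => inner ℝ (relVelocity (p r)) (x r))
      (‖relVelocity (p t)‖ ^ 2 + (√(1 + ‖p t‖ ^ 2))⁻¹ *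
        inner ℝ (F - inner ℝ (relVelocity (p t)) F • relVelocity (p t)) (x t)) S t := by
  refine ((hasDerivWithinAt_relVelocity hp).inner ℝ hx).congr_deriv ?_
  rw [real_inner_self_eq_norm_sq, real_inner_smul_left]

/-- Up to a positive factor, `F - (v · F) v` is the acceleration of a relativistic particle with
velocity `v` under the force `F`; here `F` is the outward radial force `k x`. -/
lemma inner_smul_sub_inner_smul_nonneg {v x : E} (hv : ‖v‖ ≤ 1) {k : ℝ} (hk : 0 ≤ k) :
    0 ≤ inner ℝ (k • x - inner ℝ v (k • x) • v) x := by
  have hcs : inner ℝ v x ^ 2 ≤ ‖x‖ ^ 2 := by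
    refine sq_le_sq.2 ?_
    calc |inner ℝ v x| ≤ ‖v‖ * ‖x‖ := abs_real_inner_le_norm v x
      _ ≤ ‖x‖ := mul_le_of_le_one_left (norm_nonneg x) hv
      _ = |‖x‖| := (abs_norm x).symm
  calc 0 ≤ k * (‖x‖ ^ 2 - inner ℝ v x ^ 2) := mul_nonneg hk (sub_nonneg.2 hcs)
    _ = inner ℝ (k • x - inner ℝ v (k • x) • v) x := by
      simp only [inner_sub_left, real_inner_smul_left, real_inner_smul_right,
        real_inner_self_eq_norm_sq]
      ring

end RelativisticVelocity

/-- A relativistic trajectory on `[τ, T]` with position `X` and momentum `V`, driven by an outward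
radial force of magnitude `lam` and not moving inward at time `τ`. Derivatives are taken within
`[τ, T]`, hence one-sided at the endpoints. -/
structure IsOutgoingCharacteristic {E : Type*} [NormedAddCommGroup E] [InnerProductSpace ℝ E]
    (X V : ℝ → E) (lam : ℝ → ℝ) (τ T : ℝ) : Prop where
  position_ne_zero : ∀ t ∈ Icc τ T, X t ≠ 0
  force_nonneg : ∀ t ∈ Icc τ T, 0 ≤ lam t
  hasDerivWithinAt_position : ∀ t ∈ Icc τ T,
    HasDerivWithinAt X (relVelocity (V t)) (Icc τ T) t
  hasDerivWithinAt_momentum : ∀ t ∈ Icc τ T,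
    HasDerivWithinAt V (lam t • (‖X t‖⁻¹ • X t)) (Icc τ T) t
  inner_initial_nonneg : 0 ≤ inner ℝ (V τ) (X τ)

namespace IsOutgoingCharacteristic

variable {E : Type*} [NormedAddCommGroup E] [InnerProductSpace ℝ E]
  {X V : ℝ → E} {lam : ℝ → ℝ} {τ T s : ℝ}

lemma norm_force (h : IsOutgoingCharacteristic X V lam τ T) (hs : s ∈ Icc τ T) :
    ‖lam s • (‖X s‖⁻¹ • X s)‖ = lam s := by
  have hunit : ‖‖X s‖⁻¹ • X s‖ = 1 := norm_smul_inv_norm (𝕜 := ℝ) (h.position_ne_zero s hs)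
  rw [norm_smul, hunit, mul_one, norm_of_nonneg (h.force_nonneg s hs)]

lemma mul_sub_le_inner_relVelocity (h : IsOutgoingCharacteristic X V lam τ T) {κ : ℝ}
    (hκ : ∀ t ∈ Icc τ T, κ ≤ ‖relVelocity (V t)‖ ^ 2) (hs : s ∈ Icc τ T) :
    κ * (s - τ) ≤ inner ℝ (relVelocity (V s)) (X s) := by
  refine image_le_of_hasDerivWithinAt_le (f' := fun _ => κ)
    (fun t _ => by simpa using ((hasDerivWithinAt_id t _).sub_const τ).const_mul κ)
    (fun t ht => hasDerivWithinAt_inner_relVelocity (h.hasDerivWithinAt_momentum t ht)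
      (h.hasDerivWithinAt_position t ht))
    (by simpa using inner_relVelocity_nonneg_iff.2 h.inner_initial_nonneg) (fun t ht => ?_) hs
  have hk : 0 ≤ lam t * ‖X t‖⁻¹ := mul_nonneg (h.force_nonneg t ht) (by positivity)
  rw [smul_smul]
  exact le_add_of_le_of_nonneg (hκ t ht) (mul_nonneg (by positivity)
    (inner_smul_sub_inner_smul_nonneg (norm_relVelocity_le_one _) hk))

lemma inner_nonneg (h : IsOutgoingCharacteristic X V lam τ T) (hs : s ∈ Icc τ T) :
    0 ≤ inner ℝ (V s) (X s) := by
  rw [← inner_relVelocity_nonneg_iff]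
  simpa using h.mul_sub_le_inner_relVelocity (κ := 0) (fun t _ => sq_nonneg _) hs

lemma norm_initial_momentum_le (h : IsOutgoingCharacteristic X V lam τ T) (hs : s ∈ Icc τ T) :
    ‖V τ‖ ≤ ‖V s‖ := by
  refine le_of_sq_le_sq ?_ (norm_nonneg _)
  refine image_le_of_hasDerivWithinAt_le (f := fun _ => ‖V τ‖ ^ 2)
    (fun t _ => hasDerivWithinAt_const t _ _)
    (fun t ht => (h.hasDerivWithinAt_momentum t ht).norm_sq) le_rfl (fun t ht => ?_) hs
  have hlam := h.force_nonneg t ht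
  have hinner := h.inner_nonneg ht
  simp only [real_inner_smul_right]
  positivity

lemma norm_sq_add_le_norm_position_sq (h : IsOutgoingCharacteristic X V lam τ T)
    (hs : s ∈ Icc τ T) :
    ‖X τ‖ ^ 2 + ‖relVelocity (V τ)‖ ^ 2 * (s - τ) ^ 2 ≤ ‖X s‖ ^ 2 := by
  set c := ‖relVelocity (V τ)‖
  have hradial : ∀ t ∈ Icc τ T, c ^ 2 * (t - τ) ≤ inner ℝ (relVelocity (V t)) (X t) :=
    fun t ht => h.mul_sub_le_inner_relVelocity (fun r hr => by
      have := norm_relVelocity_le_norm_relVelocity (h.norm_initial_momentum_le hr)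
      gcongr) ht
  have hquadratic : ∀ t ∈ Icc τ T, HasDerivWithinAt (fun r => ‖X τ‖ ^ 2 + c ^ 2 * (r - τ) ^ 2)
      (c ^ 2 * (2 * (t - τ))) (Icc τ T) t := fun t _ => by
    simpa using (((hasDerivWithinAt_id t _).sub_const τ).fun_pow 2).const_mul (c ^ 2)
  refine image_le_of_hasDerivWithinAt_le hquadratic
    (fun t ht => (h.hasDerivWithinAt_position t ht).norm_sq) (by simp) (fun t ht => ?_) hs
  rw [real_inner_comm]
  linarith [hradial t ht]

end IsOutgoingCharacteristic

theorem outgoing_velocity_gain_general {E : Type*} [NormedAddCommGroup E]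
    [InnerProductSpace ℝ E] {X V : ℝ → E} {lam : ℝ → ℝ} {τ T B C : ℝ}
    (h : IsOutgoingCharacteristic X V lam τ T) (hV₀ : V τ ≠ 0)
    (hB : ∀ t ∈ Icc τ T, lam t ≤ B) (hC : ∀ t ∈ Icc τ T, lam t ≤ C / ‖X t‖ ^ 2)
    {γ : ℝ} (hγ : 0 < γ) {s : ℝ} (hs : s ∈ Icc τ T) :
    ‖V s - V τ‖ ≤ B * γ + C / ((‖V τ‖ / √(1 + ‖V τ‖ ^ 2)) ^ 2 * γ) := by
  rw [← norm_relVelocity, ← div_div]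
  have hc : 0 < ‖relVelocity (V τ)‖ := norm_pos_iff.2 (relVelocity_ne_zero hV₀)
  have hC₀ : 0 ≤ C := by
    have hX : 0 < ‖X s‖ ^ 2 := pow_pos (norm_pos_iff.2 (h.position_ne_zero s hs)) 2
    simpa using (le_div_iff₀ hX).1 ((h.force_nonneg s hs).trans (hC s hs))
  refine norm_image_sub_le_of_norm_deriv_le_of_le_div_sq h.hasDerivWithinAt_momentum
    (fun t ht => (h.norm_force ht).trans_le (hB t ht)) (by positivity) (fun t ht => ?_) hγ hs
  have ht' := Ioc_subset_Icc_self ht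
  have htτ : 0 < t - τ := sub_pos.2 ht.1
  calc ‖lam t • (‖X t‖⁻¹ • X t)‖ = lam t := h.norm_force ht'
    _ ≤ C / ‖X t‖ ^ 2 := hC t ht'
    _ ≤ C / (‖relVelocity (V τ)‖ ^ 2 * (t - τ) ^ 2) := by
      gcongr
      linarith [h.norm_sq_add_le_norm_position_sq ht', sq_nonneg ‖X τ‖]
    _ = C / ‖relVelocity (V τ)‖ ^ 2 / (t - τ) ^ 2 := (div_div _ _ _).symm

/-- Velocity-gain estimate for outgoing characteristics: under a radially outward
force bounded by `B` globally and by `C/|X|²` pointwise, the speed can only increase by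
`Bγ + C/(c²γ)` for any splitting parameter `γ > 0`, where `c = |V(τ)|/√(1+|V(τ)|²)`. -/
theorem outgoing_velocity_gain (τ T : ℝ) (hτT : τ < T)
    (X V : ℝ → E3) (lam : ℝ → ℝ) (B C : ℝ) (hB : 0 < B) (hC : 0 < C)
    (hX0 : ∀ s ∈ Set.Icc τ T, X s ≠ 0) (hV0 : ∀ s ∈ Set.Icc τ T, V s ≠ 0)
    (hlam_cont : ContinuousOn lam (Set.Icc τ T))
    (hlam : ∀ s ∈ Set.Icc τ T, 0 ≤ lam s)
    (hlam_bd : ∀ s ∈ Set.Icc τ T, lam s ≤ min B (C / ‖X s‖ ^ 2))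
    (hX : ∀ s ∈ Set.Icc τ T, HasDerivAt X ((Real.sqrt (1 + ‖V s‖ ^ 2))⁻¹ • V s) s)
    (hV : ∀ s ∈ Set.Icc τ T, HasDerivAt V (lam s • (‖X s‖⁻¹ • X s)) s)
    (hinit : 0 ≤ (inner ℝ (V τ) (X τ) : ℝ)) :
    ∀ γ > (0 : ℝ), ∀ s ∈ Set.Icc τ T,
      ‖V s‖ ≤ ‖V τ‖ + B * γ +
        C / ((‖V τ‖ / Real.sqrt (1 + ‖V τ‖ ^ 2)) ^ 2 * γ) := by
  intro γ hγ s hs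
  have hτ : τ ∈ Icc τ T := left_mem_Icc.2 hτT.le
  have hout : IsOutgoingCharacteristic X V lam τ T :=
    ⟨hX0, hlam, fun t ht => (hX t ht).hasDerivWithinAt, fun t ht => (hV t ht).hasDerivWithinAt,
      hinit⟩
  linarith [norm_le_norm_add_norm_sub' (V s) (V τ), outgoing_velocity_gain_general hout (hV0 τ hτ)
    (fun t ht => (hlam_bd t ht).trans (min_le_left _ _))
    (fun t ht => (hlam_bd t ht).trans (min_le_right _ _)) hγ hs]
end
end

section
/- Fix an even smooth function $\tilde\psi : \mathbb{R} \to [0,1]$ supported in $[-3/2, 3/2]$ and equal to $1$ on $[-5/4, 5/4]$, and for $k \in \mathbb{Z}$ define $\psi_k : \mathbb{R}^3 \to \mathbb{R}$ by $\psi_k(\xi) := \tilde\psi(|\xi|/2^k) - \tilde\psi(|\xi|/2^{k-1})$, and for $l \in \mathbb{Z}$ define $\psi_{\le l} : \mathbb{R} \to \mathbb{R}$ by $\psi_{\le l}(r) := \tilde\psi(r/2^l)$. For $k \in \mathbb{Z}$, an integer $l \le 0$, and a unit vector $\theta \in \mathbb{S}^2$, define $\tilde K_{k,l,\theta}(y)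 := \int_{\mathbb{R}^3} e^{i y \cdot \xi}\, i\xi\, |\xi|^{-2}\, \psi_k(\xi)\, \psi_{\le l}\big(\theta \cdot \xi/|\xi|\big)\,d\xi$. Then for every natural number $N$ there is a constant $C_N$ (depending only on $\tilde\psi$ and $N$) such that for all such $k, l, \theta$ and all $y \in \mathbb{R}^3$: $|\tilde K_{k,l,\theta}(y)| \le C_N\, 2^{2k+l}\, (1 + 2^{k+l} |y \cdot \theta|)^{-N}\, (1 + 2^{k} |y - (y\cdot\theta)\theta|)^{-N}$. -/
open MeasureTheory Real Set
noncomputable section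

/-- The angularly localized kernel
`K_{k,l,θ}(y) = ∫ e^{iy⋅ξ} iξ |ξ|⁻² ψ_k(ξ) ψ_{≤l}(θ⋅ξ/|ξ|) dξ` of `∇Δ⁻¹` localized to
frequencies `|ξ| ≈ 2^k` whose direction is within angle `≈ 2^l` of the plane
orthogonal to `θ`; here `ψ_k(ξ) = ψ̃(|ξ|/2^k) - ψ̃(|ξ|/2^{k-1})` and
`ψ_{≤l}(r) = ψ̃(r/2^l)`. -/
def angKernel (ψ : ℝ → ℝ) (k l : ℤ) (θ : E3) (y : E3) : EuclideanSpace ℂ (Fin 3) :=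
  ∫ ξ : E3,
    (Complex.exp (Complex.I * ((inner ℝ y ξ : ℝ) : ℂ)) * Complex.I *
        (((‖ξ‖ ^ 2 : ℝ) : ℂ))⁻¹ *
        (((ψ (‖ξ‖ / 2 ^ k) - ψ (‖ξ‖ / 2 ^ (k - 1)) : ℝ)) : ℂ) *
        ((ψ (((inner ℝ θ ξ : ℝ) / ‖ξ‖) / 2 ^ l) : ℝ) : ℂ)) •
      (WithLp.toLp 2 (fun j => ((ξ j : ℝ) : ℂ)) : EuclideanSpace ℂ (Fin 3))

/-!
Rescaling `ξ = 2^k Dx`, where `D` dilates by `c = 2^l` along `θ` and fixes `θ⊥`, has Jacobian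
`2^{3k+l}` and turns the angle `θ⋅ξ/(c|ξ|)` into `θ⋅x/|Dx|`; the factor `iξ|ξ|⁻²` contributes
`2^{-k}`. The symbol obtained in this way depends smoothly on `(c, θ, x)` up to and including
`c = 0`, and it is supported in a fixed ball because `|x| ≤ |Dx| + |θ⋅x|`, so repeated integration
by parts bounds its Fourier integral uniformly over the compact set of parameters `c ∈ [0, 1]`,
`|θ| = 1`. As `D` is self-adjoint, the frequency dual to `x` is `2^k Dy`, whose components along
`θ` and `θ⊥` are exactly the two quantities in the decay weights.
-/

open FourierTransform Topology
open scoped ContDiff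

theorem integral_eq_abs_det_smul_integral_comp {V F : Type*} [NormedAddCommGroup V]
    [NormedSpace ℝ V] [FiniteDimensional ℝ V] [MeasurableSpace V] [BorelSpace V]
    [NormedAddCommGroup F] [NormedSpace ℝ F] (μ : Measure V) [μ.IsAddHaarMeasure]
    (L : V →L[ℝ] V) (hL : L.det ≠ 0) (g : V → F) :
    ∫ x, g x ∂μ = |L.det| • ∫ x, g (L x) ∂μ := by
  have hbij : Function.Bijective L :=
    (LinearMap.equivOfDetNeZero (L : V →ₗ[ℝ] V) hL).bijective
  have h := integral_image_eq_integral_abs_det_fderiv_smul μ MeasurableSet.univ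
    (fun x _ => L.hasFDerivAt.hasFDerivWithinAt) hbij.injective.injOn g
  rwa [image_univ, hbij.surjective.range_eq, Measure.restrict_univ, integral_smul] at h

section ExpIntegral

variable {V F : Type*} [NormedAddCommGroup V] [InnerProductSpace ℝ V] [FiniteDimensional ℝ V]
  [MeasurableSpace V] [BorelSpace V] [NormedAddCommGroup F] [NormedSpace ℂ F]

/-- The Fourier integral `∫ e^{iz⋅x} f(x) dx`, in the normalization of `angKernel`: without the
factor `-2π` that Mathlib's `𝓕` has in its phase. -/
def expIntegral (f : V → F) (z : V) : F :=
  ∫ x, Complex.exp (Complex.I * ((inner ℝ z x : ℝ) : ℂ)) • f x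

theorem expIntegral_eq_fourier (f : V → F) (z : V) :
    expIntegral f z = 𝓕 f (-(2 * π)⁻¹ • z) := by
  rw [Real.fourier_eq', expIntegral]
  congr 1 with x
  congr 2
  rw [inner_smul_right, real_inner_comm]
  push_cast
  have : (π : ℂ) ≠ 0 := by exact_mod_cast pi_ne_zero
  field_simp

theorem expIntegral_smul (c : ℝ) (f : V → F) (z : V) :
    expIntegral (fun x => c • f x) z = c • expIntegral f z := by
  simp only [expIntegral, smul_comm _ c, integral_smul]

theorem expIntegral_eq_abs_det_smul_comp (L : V →L[ℝ] V) (hL : L.det ≠ 0) (f : V → F) (z : V) :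
    expIntegral f z = |L.det| • expIntegral (f ∘ L) (L.adjoint z) := by
  simp only [expIntegral, ContinuousLinearMap.adjoint_inner_left, Function.comp_apply]
  exact integral_eq_abs_det_smul_integral_comp volume L hL _

theorem pow_mul_norm_expIntegral_le {f : V → F} (hf : ContDiff ℝ ∞ f) (hfc : HasCompactSupport f)
    (n : ℕ) (z : V) :
    ‖z‖ ^ n * ‖expIntegral f z‖ ≤
      (4 * π) ^ n * ∑ m ∈ Finset.range (n + 1), ∫ x, ‖iteratedFDeriv ℝ m f x‖ := by
  have hint (j m : ℕ) : Integrable fun x => ‖x‖ ^ j * ‖iteratedFDeriv ℝ m f x‖ := by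
    have hcont := hf.continuous_iteratedFDeriv (m := m) (mod_cast le_top)
    exact Continuous.integrable_of_hasCompactSupport (by fun_prop)
      (hfc.iteratedFDeriv m).norm.mul_left
  have hdecay := Real.pow_mul_norm_iteratedFDeriv_fourier_le (K := ⊤) (N := ⊤) hf
    (fun j m _ _ => hint j m) (k := 0) (n := n) le_top le_top (-(2 * π)⁻¹ • z)
  have hscale : ‖-(2 * π)⁻¹ • z‖ = (2 * π)⁻¹ * ‖z‖ := by
    rw [norm_smul, norm_neg, norm_inv, Real.norm_of_nonneg (by positivity)]
  rw [norm_iteratedFDeriv_zero, ← expIntegral_eq_fourier, hscale, mul_pow, inv_pow, mul_assoc,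
    inv_mul_le_iff₀ (by positivity), Finset.sum_product] at hdecay
  simpa [← mul_assoc, ← mul_pow, mul_right_comm _ π 2, show (2 * 2 : ℝ) = 4 by norm_num]
    using hdecay

theorem one_add_pow_mul_norm_expIntegral_le {f : V → F} (hf : ContDiff ℝ ∞ f)
    (hfc : HasCompactSupport f) (n : ℕ) (z : V) :
    (1 + ‖z‖) ^ n * ‖expIntegral f z‖ ≤
      2 ^ (n - 1) * (1 + (4 * π) ^ n) *
        ∑ m ∈ Finset.range (n + 1), ∫ x, ‖iteratedFDeriv ℝ m f x‖ := by
  set S := ∑ m ∈ Finset.range (n + 1), ∫ x, ‖iteratedFDeriv ℝ m f x‖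
  have hzero : ‖expIntegral f z‖ ≤ S := by
    have h := pow_mul_norm_expIntegral_le hf hfc 0 z
    rw [pow_zero, pow_zero, one_mul, one_mul] at h
    refine h.trans (Finset.sum_le_sum_of_subset_of_nonneg (by simp) fun _ _ _ => ?_)
    exact integral_nonneg fun _ => norm_nonneg _
  calc (1 + ‖z‖) ^ n * ‖expIntegral f z‖
      ≤ 2 ^ (n - 1) * (1 ^ n + ‖z‖ ^ n) * ‖expIntegral f z‖ := by
        gcongr
        exact add_pow_le zero_le_one (norm_nonneg z) n
    _ = 2 ^ (n - 1) * (‖expIntegral f z‖ + ‖z‖ ^ n * ‖expIntegral f z‖) := by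
        rw [one_pow]; ring
    _ ≤ 2 ^ (n - 1) * (S + (4 * π) ^ n * S) :=
        mul_le_mul_of_nonneg_left (add_le_add hzero (pow_mul_norm_expIntegral_le hf hfc n z))
          (by positivity)
    _ = 2 ^ (n - 1) * (1 + (4 * π) ^ n) * S := by ring

end ExpIntegral

section Parameters

theorem norm_iteratedFDeriv_comp_prodMk_le {𝕜 X V F : Type*} [NontriviallyNormedField 𝕜]
    [NormedAddCommGroup X] [NormedSpace 𝕜 X] [NormedAddCommGroup V] [NormedSpace 𝕜 V]
    [NormedAddCommGroup F] [NormedSpace 𝕜 F] {f : X × V → F} {m : ℕ} (hf : ContDiff 𝕜 m f)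
    (p : X) (x : V) :
    ‖iteratedFDeriv 𝕜 m (fun v => f (p, v)) x‖ ≤ ‖iteratedFDeriv 𝕜 m f (p, x)‖ := by
  have hshift : ContDiff 𝕜 m fun q : X × V => f ((p, 0) + q) :=
    hf.comp (contDiff_const.add contDiff_id)
  have hslice : (fun v => f (p, v)) =
      (fun q : X × V => f ((p, 0) + q)) ∘ ContinuousLinearMap.inr 𝕜 X V := by
    ext v; simp
  rw [hslice, ContinuousLinearMap.iteratedFDeriv_comp_right _ hshift _ le_rfl,
    iteratedFDeriv_comp_add_left]
  refine (ContinuousMultilinearMap.norm_compContinuousLinearMap_le _ _).trans ?_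
  have hinr : ∏ _i : Fin m, ‖ContinuousLinearMap.inr 𝕜 X V‖ ≤ 1 :=
    Finset.prod_le_one (fun _ _ => norm_nonneg _)
      (fun _ _ => ContinuousLinearMap.norm_inr_le_one 𝕜 X V)
  simpa using mul_le_of_le_one_right (norm_nonneg (iteratedFDeriv 𝕜 m f (p, x))) hinr

variable {X V F : Type*} [NormedAddCommGroup X] [NormedSpace ℝ X]

theorem exists_integral_norm_iteratedFDeriv_le [NormedAddCommGroup V] [NormedSpace ℝ V]
    [MeasurableSpace V] [OpensMeasurableSpace V] [NormedAddCommGroup F] [NormedSpace ℝ F]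
    (μ : Measure V) [IsFiniteMeasureOnCompacts μ] {m : ℕ} {f : X × V → F} (hf : ContDiff ℝ m f)
    {P : Set X} (hP : IsCompact P) {K : Set V} (hK : IsCompact K)
    (hfK : ∀ p ∈ P, ∀ x ∉ K, f (p, x) = 0) :
    ∃ C : ℝ, ∀ p ∈ P, ∫ x, ‖iteratedFDeriv ℝ m (fun v => f (p, v)) x‖ ∂μ ≤ C := by
  obtain ⟨M, hM⟩ := (hP.prod hK).exists_bound_of_continuousOn
    (hf.continuous_iteratedFDeriv le_rfl).continuousOn
  refine ⟨∫ _ in K, M ∂μ, fun p hp => ?_⟩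
  have hslice : ContDiff ℝ m fun v => f (p, v) := hf.comp (contDiff_const.prodMk contDiff_id)
  have hvanish : ∀ x ∉ K, ‖iteratedFDeriv ℝ m (fun v => f (p, v)) x‖ = 0 := fun x hx => by
    have htsupp : tsupport (fun v => f (p, v)) ⊆ K :=
      closure_minimal (fun v hv => by_contra fun hvK => hv (hfK p hp v hvK)) hK.isClosed
    exact norm_eq_zero.2 (by_contra fun hne => hx (htsupp (support_iteratedFDeriv_subset m hne)))
  rw [← setIntegral_eq_integral_of_forall_compl_eq_zero hvanish]
  exact setIntegral_mono_on
    ((hslice.continuous_iteratedFDeriv le_rfl).norm.continuousOn.integrableOn_compact hK)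
    (integrableOn_const hK.measure_lt_top.ne) hK.measurableSet
    fun x hx => (norm_iteratedFDeriv_comp_prodMk_le hf p x).trans (hM (p, x) ⟨hp, hx⟩)

theorem exists_one_add_pow_mul_norm_expIntegral_le [NormedAddCommGroup V]
    [InnerProductSpace ℝ V] [FiniteDimensional ℝ V] [MeasurableSpace V] [BorelSpace V]
    [NormedAddCommGroup F] [NormedSpace ℂ F] {f : X × V → F} (hf : ContDiff ℝ ∞ f)
    {P : Set X} (hP : IsCompact P) {K : Set V} (hK : IsCompact K)
    (hfK : ∀ p ∈ P, ∀ x ∉ K, f (p, x) = 0) (n : ℕ) :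
    ∃ C : ℝ, ∀ p ∈ P, ∀ z : V,
      (1 + ‖z‖) ^ n * ‖expIntegral (fun x => f (p, x)) z‖ ≤ C := by
  choose M hM using fun m : ℕ => exists_integral_norm_iteratedFDeriv_le volume
    (hf.of_le (mod_cast le_top : (m : ℕ∞ω) ≤ ∞)) hP hK hfK
  refine ⟨2 ^ (n - 1) * (1 + (4 * π) ^ n) * ∑ m ∈ Finset.range (n + 1), M m, fun p hp z => ?_⟩
  have hslice : ContDiff ℝ ∞ fun x => f (p, x) := hf.comp (contDiff_const.prodMk contDiff_id)
  refine (one_add_pow_mul_norm_expIntegral_le hslice (.intro hK (hfK p hp)) n z).trans ?_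
  gcongr with m
  exact hM m p hp

end Parameters

theorem contDiff_of_forall_mem_tsupport {𝕜 E F : Type*} [NontriviallyNormedField 𝕜]
    [NormedAddCommGroup E] [NormedSpace 𝕜 E] [NormedAddCommGroup F] [NormedSpace 𝕜 F] {n : ℕ∞ω}
    {f : E → F} (hf : ∀ x ∈ tsupport f, ContDiffAt 𝕜 n f x) : ContDiff 𝕜 n f :=
  contMDiff_iff_contDiff.1 (contMDiff_of_tsupport fun x hx => (hf x hx).contMDiffAt)

section AngularSymbol

variable {V F : Type*} [NormedAddCommGroup V] [InnerProductSpace ℝ V]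

/-- For a unit vector `θ`, the linear map dilating by `c` along `θ` and fixing the orthogonal
complement of `θ`. -/
def dilateAlong (c : ℝ) (θ : V) : V →L[ℝ] V :=
  .id ℝ V + ((c - 1) • innerSL ℝ θ).smulRight θ

theorem dilateAlong_apply (c : ℝ) (θ x : V) :
    dilateAlong c θ x = x + ((c - 1) * inner ℝ θ x) • θ := by
  simp [dilateAlong]

theorem contDiff_dilateAlong :
    ContDiff ℝ ∞ fun q : (ℝ × V) × V => dilateAlong q.1.1 q.1.2 q.2 := by
  simp only [dilateAlong_apply]
  have hinner : ContDiff ℝ ∞ fun q : (ℝ × V) × V => inner ℝ q.1.2 q.2 :=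
    ContDiff.inner ℝ (by fun_prop) contDiff_snd
  fun_prop

theorem inner_dilateAlong (c : ℝ) {θ : V} (hθ : ‖θ‖ = 1) (x : V) :
    inner ℝ θ (dilateAlong c θ x) = c * inner ℝ θ x := by
  rw [dilateAlong_apply, inner_add_right, inner_smul_right, real_inner_self_eq_norm_sq, hθ]
  ring

theorem dilateAlong_sub_inner_smul (c : ℝ) {θ : V} (hθ : ‖θ‖ = 1) (x : V) :
    dilateAlong c θ x - inner ℝ θ (dilateAlong c θ x) • θ = x - inner ℝ θ x • θ := by
  rw [inner_dilateAlong c hθ, dilateAlong_apply]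
  module

theorem abs_mul_abs_inner_le_norm_dilateAlong (c : ℝ) {θ : V} (hθ : ‖θ‖ = 1) (x : V) :
    |c| * |inner ℝ θ x| ≤ ‖dilateAlong c θ x‖ := by
  rw [← abs_mul, ← inner_dilateAlong c hθ]
  simpa [hθ] using abs_real_inner_le_norm θ (dilateAlong c θ x)

theorem norm_sub_inner_smul_le_norm_dilateAlong (c : ℝ) {θ : V} (hθ : ‖θ‖ = 1) (x : V) :
    ‖x - inner ℝ θ x • θ‖ ≤ ‖dilateAlong c θ x‖ := by
  rw [← dilateAlong_sub_inner_smul c hθ, ← Submodule.starProjection_unit_singleton ℝ hθ,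
    ← Submodule.starProjection_orthogonal_val]
  exact Submodule.norm_starProjection_apply_le _ _

theorem one_add_pow_mul_one_add_pow_le_norm_dilateAlong {r c : ℝ} (hr : 0 ≤ r) (hc : 0 ≤ c)
    {θ : V} (hθ : ‖θ‖ = 1) (y : V) (N : ℕ) :
    (1 + r * c * |inner ℝ y θ|) ^ N * (1 + r * ‖y - inner ℝ y θ • θ‖) ^ N ≤
      (1 + ‖r • dilateAlong c θ y‖) ^ (2 * N) := by
  have hpar := abs_mul_abs_inner_le_norm_dilateAlong c hθ y
  rw [abs_of_nonneg hc] at hpar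
  rw [real_inner_comm, norm_smul, Real.norm_of_nonneg hr, two_mul, pow_add, mul_assoc r]
  gcongr
  exact norm_sub_inner_smul_le_norm_dilateAlong c hθ y

theorem norm_le_norm_dilateAlong_add (c : ℝ) {θ : V} (hθ : ‖θ‖ = 1) (x : V) :
    ‖x‖ ≤ ‖dilateAlong c θ x‖ + |inner ℝ θ x| :=
  calc ‖x‖ ≤ ‖x - inner ℝ θ x • θ‖ + ‖inner ℝ θ x • θ‖ := norm_le_norm_sub_add _ _
    _ ≤ ‖dilateAlong c θ x‖ + |inner ℝ θ x| := by
      rw [norm_smul, hθ, mul_one, Real.norm_eq_abs]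
      gcongr
      exact norm_sub_inner_smul_le_norm_dilateAlong c hθ x

theorem det_dilateAlong [FiniteDimensional ℝ V] (c : ℝ) {θ : V} (hθ : ‖θ‖ = 1) :
    (dilateAlong c θ).det = c := by
  have h : (dilateAlong c θ : V →ₗ[ℝ] V) =
      LinearMap.transvection ((c - 1) • (innerSL ℝ θ : V →ₗ[ℝ] ℝ)) θ := by
    ext x
    simp [dilateAlong_apply, LinearMap.transvection.apply]
  rw [ContinuousLinearMap.det, h, LinearMap.transvection.det]
  simp [hθ]

theorem adjoint_dilateAlong [CompleteSpace V] (c : ℝ) (θ : V) :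
    (dilateAlong c θ).adjoint = dilateAlong c θ := by
  rw [eq_comm, ContinuousLinearMap.eq_adjoint_iff]
  intro x y
  simp only [dilateAlong_apply, inner_add_left, inner_add_right, real_inner_smul_left,
    real_inner_smul_right, real_inner_comm θ x]
  ring

variable [NormedAddCommGroup F] [NormedSpace ℝ F]

/-- The symbol `φ(θ⋅ξ/(c|ξ|)) a(ξ)` of angular localization at scale `c`, pulled back by
`ξ = dilateAlong c θ x`. The cancellation `θ⋅ξ = c (θ⋅x)` makes sense of it at `c = 0` too. -/
def angularSymbol (φ : ℝ → ℝ) (a : V → F) (q : (ℝ × V) × V) : F :=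
  φ (inner ℝ q.1.2 q.2 / ‖dilateAlong q.1.1 q.1.2 q.2‖) • a (dilateAlong q.1.1 q.1.2 q.2)

theorem contDiff_angularSymbol {φ : ℝ → ℝ} (hφ : ContDiff ℝ ∞ φ) {a : V → F}
    (ha : ContDiff ℝ ∞ a) (ha₀ : 0 ∉ tsupport a) : ContDiff ℝ ∞ (angularSymbol φ a) := by
  refine contDiff_of_forall_mem_tsupport fun q hq => ?_
  have hq' : dilateAlong q.1.1 q.1.2 q.2 ∈ tsupport a :=
    tsupport_comp_subset_preimage a contDiff_dilateAlong.continuous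
      (tsupport_smul_subset_right _ _ hq)
  have hne : dilateAlong q.1.1 q.1.2 q.2 ≠ 0 := fun h => ha₀ (h ▸ hq')
  have hdilate := contDiff_dilateAlong.contDiffAt (x := q)
  have hinner : ContDiffAt ℝ ∞ (fun q : (ℝ × V) × V => inner ℝ q.1.2 q.2) q :=
    ContDiffAt.inner ℝ (by fun_prop) contDiffAt_snd
  exact (hφ.contDiffAt.comp q (hinner.div (hdilate.norm ℝ hne) (norm_ne_zero_iff.2 hne))).fun_smul
    (ha.contDiffAt.comp q hdilate)

theorem exists_angularSymbol_eq_zero_of_lt_norm {φ : ℝ → ℝ} (hφc : HasCompactSupport φ)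
    {a : V → F} (hac : HasCompactSupport a) (ha₀ : a 0 = 0) :
    ∃ R : ℝ, ∀ (c : ℝ) (θ : V), ‖θ‖ = 1 → ∀ x, R < ‖x‖ → angularSymbol φ a ((c, θ), x) = 0 := by
  obtain ⟨B, hB⟩ := hφc.isCompact.isBounded.exists_norm_le
  obtain ⟨A, hA⟩ := hac.isCompact.isBounded.exists_norm_le
  refine ⟨A + B * A, fun c θ hθ x hx => ?_⟩
  contrapose! hx
  obtain ⟨hφx, hax⟩ := smul_ne_zero_iff.1 hx
  have hpos : 0 < ‖dilateAlong c θ x‖ := norm_pos_iff.2 fun h => hax (by simpa [h] using ha₀)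
  have hdilate : ‖dilateAlong c θ x‖ ≤ A := hA _ (subset_tsupport a hax)
  have hangle := hB _ (subset_tsupport φ hφx)
  rw [Real.norm_eq_abs, abs_div, abs_of_pos hpos, div_le_iff₀ hpos] at hangle
  have hB₀ : 0 ≤ B := (norm_nonneg _).trans (hB _ (subset_tsupport φ hφx))
  calc ‖x‖ ≤ ‖dilateAlong c θ x‖ + |inner ℝ θ x| := norm_le_norm_dilateAlong_add c hθ x
    _ ≤ ‖dilateAlong c θ x‖ + B * ‖dilateAlong c θ x‖ := by gcongr
    _ ≤ A + B * A := by gcongr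

end AngularSymbol

section AngularKernel

variable {V F : Type*} [NormedAddCommGroup V] [InnerProductSpace ℝ V] [FiniteDimensional ℝ V]
  [MeasurableSpace V] [BorelSpace V] [NormedAddCommGroup F] [NormedSpace ℂ F]

/-- The kernel `∫ e^{iy⋅ξ} φ(θ⋅ξ/(c|ξ|)) a(ξ/r) dξ` of the multiplier with profile `a` at
frequency scale `r`, localized by `φ` to within angle `c` of the hyperplane orthogonal to `θ`. -/
def angularKernel (φ : ℝ → ℝ) (a : V → F) (r c : ℝ) (θ : V) : V → F :=
  expIntegral fun ξ => φ (inner ℝ θ ξ / ‖ξ‖ / c) • a (r⁻¹ • ξ)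

theorem angularKernel_eq_smul_expIntegral (φ : ℝ → ℝ) (a : V → F) {r c : ℝ} (hr : 0 < r)
    (hc : 0 < c) {θ : V} (hθ : ‖θ‖ = 1) (y : V) :
    angularKernel φ a r c θ y = (r ^ Module.finrank ℝ V * c) •
      expIntegral (fun x => angularSymbol φ a ((c, θ), x)) (r • dilateAlong c θ y) := by
  have hdet : (r • dilateAlong c θ).det = r ^ Module.finrank ℝ V * c := by
    rw [ContinuousLinearMap.det, ContinuousLinearMap.toLinearMap_smul, LinearMap.det_smul,
      ← ContinuousLinearMap.det, det_dilateAlong c hθ]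
  have hpos : 0 < r ^ Module.finrank ℝ V * c := by positivity
  rw [angularKernel, expIntegral_eq_abs_det_smul_comp (r • dilateAlong c θ) (hdet ▸ hpos.ne'),
    hdet, abs_of_pos hpos, map_smulₛₗ, adjoint_dilateAlong]
  congr 2 with x
  have hangle : inner ℝ θ (r • dilateAlong c θ x) / ‖r • dilateAlong c θ x‖ / c =
      inner ℝ θ x / ‖dilateAlong c θ x‖ := by
    rw [norm_smul, Real.norm_of_nonneg hr.le, inner_smul_right, inner_dilateAlong c hθ]
    field_simp
  simp only [Function.comp_apply, smul_apply, angularSymbol, hangle,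
    inv_smul_smul₀ hr.ne']

theorem exists_norm_angularKernel_le {φ : ℝ → ℝ} (hφ : ContDiff ℝ ∞ φ) (hφc : HasCompactSupport φ)
    {a : V → F} (ha : ContDiff ℝ ∞ a) (hac : HasCompactSupport a) (ha₀ : 0 ∉ tsupport a)
    (c₀ : ℝ) (N : ℕ) :
    ∃ C : ℝ, ∀ r > 0, ∀ c ∈ Ioc 0 c₀, ∀ θ : V, ‖θ‖ = 1 → ∀ y : V,
      ‖angularKernel φ a r c θ y‖ ≤
        C * (r ^ Module.finrank ℝ V * c) *
          ((1 + r * c * |inner ℝ y θ|) ^ N)⁻¹ *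
          ((1 + r * ‖y - inner ℝ y θ • θ‖) ^ N)⁻¹ := by
  obtain ⟨R, hR⟩ := exists_angularSymbol_eq_zero_of_lt_norm hφc hac
    (image_eq_zero_of_notMem_tsupport ha₀)
  obtain ⟨C, hC⟩ := exists_one_add_pow_mul_norm_expIntegral_le (contDiff_angularSymbol hφ ha ha₀)
    (isCompact_Icc.prod (isCompact_sphere 0 1) : IsCompact (Icc 0 c₀ ×ˢ Metric.sphere (0 : V) 1))
    (isCompact_closedBall 0 R)
    (fun p hp x hx => hR p.1 p.2 (by simpa using hp.2) x (by simpa using hx)) (2 * N)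
  refine ⟨C, fun r hr c ⟨hc, hcc₀⟩ θ hθ y => ?_⟩
  have hdecay := hC (c, θ) ⟨⟨hc.le, hcc₀⟩, by simpa using hθ⟩ (r • dilateAlong c θ y)
  have hweight := one_add_pow_mul_one_add_pow_le_norm_dilateAlong hr.le hc.le hθ y N
  rw [angularKernel_eq_smul_expIntegral φ a hr hc hθ, norm_smul,
    Real.norm_of_nonneg (by positivity), mul_assoc (C * _), ← mul_inv, ← div_eq_mul_inv,
    le_div_iff₀ (by positivity), mul_assoc, mul_comm C, mul_comm ‖expIntegral _ _‖]
  gcongr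
  exact (mul_le_mul_of_nonneg_right hweight (norm_nonneg _)).trans hdecay

end AngularKernel

section GradInvLaplace

theorem hasCompactSupport_comp_norm {V F : Type*} [NormedAddCommGroup V] [ProperSpace V] [Zero F]
    {χ : ℝ → F} (hχ : HasCompactSupport χ) : HasCompactSupport fun x : V => χ ‖x‖ := by
  rw [hasCompactSupport_iff_eventuallyEq, Filter.coclosedCompact_eq_cocompact] at hχ ⊢
  exact ((tendsto_norm_cocompact_atTop (E := V)).mono_right atTop_le_cocompact).eventually hχ

variable {ι : Type*} [Fintype ι]

/-- The symbol `χ(|ξ|) iξ|ξ|⁻²` of `∇Δ⁻¹` cut off radially by `χ`, with the sign of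
`angKernel`. -/
def gradInvLaplaceSymbol (χ : ℝ → ℝ) (ξ : EuclideanSpace ℝ ι) : EuclideanSpace ℂ ι :=
  χ ‖ξ‖ • (‖ξ‖ ^ 2)⁻¹ • WithLp.toLp 2 fun j => Complex.I * (ξ j : ℂ)

theorem zero_notMem_tsupport_gradInvLaplaceSymbol {χ : ℝ → ℝ} (hχ₀ : 0 ∉ tsupport χ) :
    (0 : EuclideanSpace ℝ ι) ∉ tsupport (gradInvLaplaceSymbol χ) := fun h => by
  have h := tsupport_comp_subset_preimage χ continuous_norm (tsupport_smul_subset_left _ _ h)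
  exact hχ₀ (by simpa using h)

theorem hasCompactSupport_gradInvLaplaceSymbol {χ : ℝ → ℝ} (hχ : HasCompactSupport χ) :
    HasCompactSupport (gradInvLaplaceSymbol (ι := ι) χ) :=
  (hasCompactSupport_comp_norm hχ).smul_right

theorem contDiff_gradInvLaplaceSymbol {χ : ℝ → ℝ} (hχ : ContDiff ℝ ∞ χ) (hχ₀ : 0 ∉ tsupport χ) :
    ContDiff ℝ ∞ (gradInvLaplaceSymbol (ι := ι) χ) := by
  refine contDiff_of_forall_mem_tsupport fun ξ hξ => ?_
  have hne : ξ ≠ 0 := fun h => zero_notMem_tsupport_gradInvLaplaceSymbol hχ₀ (h ▸ hξ)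
  have hnorm : ContDiffAt ℝ ∞ (fun ξ : EuclideanSpace ℝ ι => ‖ξ‖) ξ := contDiffAt_norm ℝ hne
  have hvec : ContDiff ℝ ∞ fun ξ : EuclideanSpace ℝ ι =>
      (WithLp.toLp 2 fun j => Complex.I * (ξ j : ℂ) : EuclideanSpace ℂ ι) :=
    contDiff_piLp' 2 fun j => contDiff_const.mul
      (Complex.ofRealCLM.contDiff.comp (contDiff_piLp_apply (p := 2)))
  exact (hχ.contDiffAt.comp ξ hnorm).fun_smul
    (((hnorm.pow 2).inv (by simpa using hne)).fun_smul hvec.contDiffAt)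

/-- The radial profile `ψ̃(t) - ψ̃(2t)` of the Littlewood–Paley cutoff:
`ψ_k(ξ) = annularCutoff ψ̃ (|ξ|/2^k)`. -/
def annularCutoff (ψ : ℝ → ℝ) (t : ℝ) : ℝ :=
  ψ t - ψ (2 * t)

theorem contDiff_annularCutoff {ψ : ℝ → ℝ} {n : ℕ∞ω} (hψ : ContDiff ℝ n ψ) :
    ContDiff ℝ n (annularCutoff ψ) :=
  hψ.sub (hψ.comp (contDiff_const.mul contDiff_id))

theorem hasCompactSupport_annularCutoff {ψ : ℝ → ℝ} (hψ : HasCompactSupport ψ) :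
    HasCompactSupport (annularCutoff ψ) :=
  HasCompactSupport.sub (f := ψ) (f' := fun t => ψ ((2 : ℝ) • t)) hψ (hψ.comp_smul two_ne_zero)

theorem zero_notMem_tsupport_annularCutoff {ψ : ℝ → ℝ} {b : ℝ} (hψ : ∀ᶠ t in 𝓝 0, ψ t = b) :
    0 ∉ tsupport (annularCutoff ψ) := by
  have hdouble : Filter.Tendsto (fun t : ℝ => 2 * t) (𝓝 0) (𝓝 0) :=
    Continuous.tendsto' (by fun_prop) _ _ (mul_zero 2)
  rw [notMem_tsupport_iff_eventuallyEq]
  filter_upwards [hψ, hdouble.eventually hψ] with t ht h2t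
  simp [annularCutoff, ht, h2t]

theorem angKernel_eq_smul_angularKernel (ψ : ℝ → ℝ) (k l : ℤ) (θ y : E3) :
    angKernel ψ k l θ y = ((2 : ℝ) ^ k)⁻¹ •
      angularKernel ψ (gradInvLaplaceSymbol (annularCutoff ψ)) (2 ^ k) (2 ^ l) θ y := by
  rw [angularKernel, ← expIntegral_smul]
  refine integral_congr_ae (.of_forall fun ξ => ?_)
  have hnorm : ‖((2 : ℝ) ^ k)⁻¹ • ξ‖ = ‖ξ‖ / 2 ^ k := by
    rw [norm_smul, norm_inv, Real.norm_of_nonneg (by positivity), inv_mul_eq_div]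
  have hhalf : 2 * (‖ξ‖ / 2 ^ k) = ‖ξ‖ / 2 ^ (k - 1) := by
    rw [zpow_sub_one₀ two_ne_zero]; field_simp
  ext j
  simp only [gradInvLaplaceSymbol, annularCutoff, hnorm, hhalf, PiLp.smul_apply, smul_eq_mul,
    Complex.real_smul]
  push_cast
  field_simp

theorem ang_kernel_bound_general {ψ : ℝ → ℝ} (hψ : ContDiff ℝ ∞ ψ) (hψc : HasCompactSupport ψ)
    {b : ℝ} (hψ₀ : ∀ᶠ t in 𝓝 0, ψ t = b) (l₀ : ℤ) (N : ℕ) :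
    ∃ C : ℝ, ∀ k l : ℤ, l ≤ l₀ → ∀ θ : E3, ‖θ‖ = 1 → ∀ y : E3,
      ‖angKernel ψ k l θ y‖ ≤
        C * 2 ^ (2 * k + l) *
          ((1 + 2 ^ (k + l) * |inner ℝ y θ|) ^ N)⁻¹ *
          ((1 + 2 ^ k * ‖y - inner ℝ y θ • θ‖) ^ N)⁻¹ := by
  have hχ₀ := zero_notMem_tsupport_annularCutoff hψ₀
  obtain ⟨C, hC⟩ := exists_norm_angularKernel_le hψ hψc
    (contDiff_gradInvLaplaceSymbol (ι := Fin 3) (contDiff_annularCutoff hψ) hχ₀)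
    (hasCompactSupport_gradInvLaplaceSymbol (hasCompactSupport_annularCutoff hψc))
    (zero_notMem_tsupport_gradInvLaplaceSymbol hχ₀) (2 ^ l₀) N
  refine ⟨C, fun k l hl θ hθ y => ?_⟩
  have hscale : (2 : ℝ) ^ (2 * k + l) = (2 ^ k)⁻¹ * ((2 ^ k) ^ Module.finrank ℝ E3 * 2 ^ l) := by
    rw [finrank_euclideanSpace_fin, zpow_add₀ two_ne_zero, mul_comm 2 k, zpow_mul]
    field_simp
  rw [angKernel_eq_smul_angularKernel, norm_smul, norm_inv, Real.norm_of_nonneg (by positivity),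
    hscale, zpow_add₀ two_ne_zero, mul_left_comm C, mul_assoc (2 ^ k)⁻¹, mul_assoc (2 ^ k)⁻¹]
  gcongr
  exact hC (2 ^ k) (by positivity) (2 ^ l)
    ⟨by positivity, zpow_le_zpow_right₀ one_le_two hl⟩ θ hθ y

end GradInvLaplace

/-- Anisotropic decay of the angularly localized kernel:
`|K_{k,l,θ}(y)| ≤ C_N 2^{2k+l} (1 + 2^{k+l}|y⋅θ|)^{-N} (1 + 2^k |y - (y⋅θ)θ|)^{-N}`. -/
theorem ang_kernel_bound
    (ψ : ℝ → ℝ) (hψ_smooth : ContDiff ℝ (⊤ : ℕ∞) ψ) (hψ_even : ∀ r, ψ (-r) = ψ r)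
    (hψ_range : ∀ r, ψ r ∈ Set.Icc (0 : ℝ) 1)
    (hψ_supp : Function.support ψ ⊆ Set.Icc (-(3 / 2)) (3 / 2))
    (hψ_one : ∀ r : ℝ, |r| ≤ 5 / 4 → ψ r = 1)
    (N : ℕ) :
    ∃ C : ℝ, ∀ (k l : ℤ), l ≤ 0 → ∀ θ : E3, ‖θ‖ = 1 → ∀ y : E3,
      ‖angKernel ψ k l θ y‖ ≤
        C * (2 : ℝ) ^ (2 * k + l) *
          (((1 + (2 : ℝ) ^ (k + l) * |(inner ℝ y θ : ℝ)|) ^ N))⁻¹ *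
          (((1 + (2 : ℝ) ^ k * ‖y - (inner ℝ y θ : ℝ) • θ‖) ^ N))⁻¹ := by
  have hψ_near : ∀ᶠ t in 𝓝 0, ψ t = 1 :=
    ((continuous_abs.tendsto' 0 0 abs_zero).eventually_le_const (by norm_num)).mono hψ_one
  exact ang_kernel_bound_general hψ_smooth
    (.of_support_subset_isCompact isCompact_Icc hψ_supp) hψ_near 0 N
end
end

section
/- There is an absolute constant $C$ such that for all unit vectors $a, b \in \mathbb{S}^2 \subset \mathbb{R}^3$ and all $\epsilon \in (0,1)$, the surface measure of the set $\{c \in \mathbb{S}^2 : |(a - c) \times b| \le \epsilon\}$ is at most $C\, \epsilon^{3/2}$. -/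
/-!
In coordinates whose axis `0` is `b`, `|(a - c) × b| ≤ ε` says that `c` lies in a solid cylinder of
radius `ε` around the line through `a` in the direction of `b`. The `ε ^ (3 / 2)` comes from the
points where the sphere is nearly tangent to the axis: there `c` moves along the axis by about `√ε`,
since only the square of the axial coordinate is determined up to `O(ε)`. Hence each coordinate of
`c` is confined to a set of measure `O(√ε)`, and each of the two coordinates transverse to the axis
to an interval of length `2ε`. On the part of the sphere where the `i`-th coordinate is not small
and has constant sign, forgetting that coordinate is antilipschitz, so the area of that part is
controlled by the product of the measures for the two other coordinates, at least one of which is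
transverse.
-/

open MeasureTheory Real Set
noncomputable section

/-- The cross product on `ℝ³` (with the Euclidean norm). -/
def cross3 (u v : E3) : E3 :=
  !₂[u 1 * v 2 - u 2 * v 1, u 2 * v 0 - u 0 * v 2, u 0 * v 1 - u 1 * v 0]

lemma hausdorffMeasure_le_of_antilipschitzWith_domRestrict {X Y : Type*} [EMetricSpace X]
    [EMetricSpace Y] [MeasurableSpace X] [BorelSpace X] [MeasurableSpace Y] [BorelSpace Y]
    {K : NNReal} {f : X → Y} {s : Set X}
    {d : ℝ} (hf : AntilipschitzWith K (s.domRestrict f)) (hd : 0 ≤ d) :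
    μH[d] s ≤ K ^ d * μH[d] (f '' s) := by
  have h_subtype : μH[d] s = μH[d] (univ : Set s) := by
    simpa using (isometry_subtype_coe (s := s)).hausdorffMeasure_image (.inl hd) univ
  simpa [h_subtype] using hf.le_hausdorffMeasure_image hd univ

lemma sq_sub_le_abs_sq_sub_sq {x y : ℝ} (h : 0 ≤ x * y) : (x - y) ^ 2 ≤ |x ^ 2 - y ^ 2| := by
  have h_abs : |x - y| ≤ |x + y| := sq_le_sq.1 (by linarith [add_sq x y, sub_sq x y])
  calc (x - y) ^ 2 = |x - y| * |x - y| := by rw [abs_mul_abs_self, sq]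
    _ ≤ |x + y| * |x - y| := by gcongr
    _ = |x ^ 2 - y ^ 2| := by rw [← abs_mul, sq_sub_sq]

lemma volume_setOf_abs_sq_sub_le (M r : ℝ) :
    volume {z : ℝ | |z ^ 2 - M| ≤ r} ≤ ENNReal.ofReal (2 * √(2 * r)) := by
  set s := {z : ℝ | |z ^ 2 - M| ≤ r}
  have h_piece {t : Set ℝ} (hts : t ⊆ s) (ht : ∀ x ∈ t, ∀ y ∈ t, 0 ≤ x * y) :
      volume t ≤ ENNReal.ofReal √(2 * r) := by
    refine (Real.volume_le_diam t).trans (Metric.ediam_le_of_forall_dist_le fun x hx y hy => ?_)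
    exact abs_le_sqrt <|
      calc (x - y) ^ 2 ≤ |x ^ 2 - y ^ 2| := sq_sub_le_abs_sq_sub_sq (ht x hx y hy)
        _ ≤ |x ^ 2 - M| + |M - y ^ 2| := abs_sub_le _ _ _
        _ ≤ 2 * r := by
          linarith [abs_sub_comm M (y ^ 2), mem_ofPred.1 (hts hx), mem_ofPred.1 (hts hy)]
  calc volume s = volume (s ∩ Ici 0 ∪ s ∩ Iic 0) := by
        rw [← inter_union_distrib_left, union_comm, Iic_union_Ici, inter_univ]
    _ ≤ volume (s ∩ Ici 0) + volume (s ∩ Iic 0) := measure_union_le _ _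
    _ ≤ ENNReal.ofReal √(2 * r) + ENNReal.ofReal √(2 * r) := by
        gcongr
        · exact h_piece inter_subset_left fun x hx y hy => mul_nonneg hx.2 hy.2
        · exact h_piece inter_subset_left fun x hx y hy => mul_nonneg_of_nonpos_of_nonpos hx.2 hy.2
    _ = ENNReal.ofReal (2 * √(2 * r)) := by
        rw [← ENNReal.ofReal_add (sqrt_nonneg _) (sqrt_nonneg _), ← two_mul]

section Sphere

variable {n : ℕ}

lemma norm_sq_eq_coord_sq_add_sum_succAbove (i : Fin (n + 1)) (x : EuclideanSpace ℝ (Fin (n + 1))) :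
    ‖x‖ ^ 2 = x i ^ 2 + ∑ j, x (i.succAbove j) ^ 2 := by
  rw [EuclideanSpace.real_norm_sq_eq, Fin.sum_univ_succAbove _ i]

-- As `x + y ⟂ x - y`, this is Bessel's inequality for the `i`-th basis vector.
lemma sq_coord_add_mul_norm_sub_sq_le (i : Fin (n + 1)) {x y : EuclideanSpace ℝ (Fin (n + 1))}
    (h : ‖x‖ = ‖y‖) :
    (x i + y i) ^ 2 * ‖x - y‖ ^ 2 ≤
      ‖x + y‖ ^ 2 * ∑ j, (x (i.succAbove j) - y (i.succAbove j)) ^ 2 := by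
  set D := ∑ j, (x (i.succAbove j) - y (i.succAbove j)) ^ 2
  set S := ∑ j, (x (i.succAbove j) + y (i.succAbove j)) ^ 2
  have h_sub : ‖x - y‖ ^ 2 = (x i - y i) ^ 2 + D := norm_sq_eq_coord_sq_add_sum_succAbove i _
  have h_add : ‖x + y‖ ^ 2 = (x i + y i) ^ 2 + S := norm_sq_eq_coord_sq_add_sum_succAbove i _
  have h_orth : (x i + y i) * (x i - y i) =
      -∑ j, (x (i.succAbove j) + y (i.succAbove j)) * (x (i.succAbove j) - y (i.succAbove j)) := by
    have h_norm := congrArg (· ^ 2) h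
    simp only [norm_sq_eq_coord_sq_add_sum_succAbove i] at h_norm
    simp only [← sq_sub_sq, Finset.sum_sub_distrib]
    linarith
  have h_cauchy : (x i + y i) ^ 2 * (x i - y i) ^ 2 ≤ S * D := by
    rw [← mul_pow, h_orth, neg_sq]
    exact Finset.sum_mul_sq_le_sq_mul_sq _ _ _
  rw [h_sub, h_add]
  linarith

lemma norm_add_sq_le_four {F : Type*} [SeminormedAddCommGroup F] {x y : F} (hx : ‖x‖ = 1)
    (hy : ‖y‖ = 1) : ‖x + y‖ ^ 2 ≤ 4 := by
  have h_two : ‖x + y‖ ≤ 2 := (norm_add_le x y).trans_eq (by rw [hx, hy]; norm_num)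
  exact (pow_le_pow_left₀ (norm_nonneg _) h_two 2).trans_eq (by norm_num)

lemma dist_le_mul_dist_removeNth (i : Fin (n + 1)) {x y : EuclideanSpace ℝ (Fin (n + 1))}
    (hx : ‖x‖ = 1) (hy : ‖y‖ = 1) (hxi : 1 ≤ (n + 1) * x i ^ 2) (hyi : 1 ≤ (n + 1) * y i ^ 2)
    (hxy : 0 ≤ x i * y i) :
    dist x y ≤ (n + 1) * dist (i.removeNth x) (i.removeNth y) := by
  set m := dist (i.removeNth x) (i.removeNth y)
  have h_coord (j : Fin n) : (x (i.succAbove j) - y (i.succAbove j)) ^ 2 ≤ m ^ 2 :=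
    sq_le_sq' (abs_le.1 (dist_le_pi_dist (i.removeNth x) (i.removeNth y) j)).1
      (abs_le.1 (dist_le_pi_dist (i.removeNth x) (i.removeNth y) j)).2
  have h_sum : ∑ j, (x (i.succAbove j) - y (i.succAbove j)) ^ 2 ≤ n * m ^ 2 := by
    simpa using Finset.sum_le_card_nsmul Finset.univ _ _ fun j _ => h_coord j
  have h_prod : 1 ≤ (n + 1) * (x i * y i) := by
    refine (one_le_sq_iff₀ (by positivity)).1 ?_
    calc (1 : ℝ) ≤ ((n + 1) * x i ^ 2) * ((n + 1) * y i ^ 2) :=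
          one_le_mul_of_one_le_of_one_le hxi hyi
      _ = ((n + 1) * (x i * y i)) ^ 2 := by ring
  have h_coord_add : 4 ≤ (n + 1) * (x i + y i) ^ 2 := by
    nlinarith [sq_nonneg (x i - y i)]
  have h_sq : 4 * dist x y ^ 2 ≤ 4 * ((n + 1) * m) ^ 2 :=
    calc 4 * dist x y ^ 2 ≤ (n + 1) * (x i + y i) ^ 2 * ‖x - y‖ ^ 2 := by
          rw [dist_eq_norm]; gcongr
      _ ≤ (n + 1) * (‖x + y‖ ^ 2 * ∑ j, (x (i.succAbove j) - y (i.succAbove j)) ^ 2) := by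
          rw [mul_assoc]
          refine mul_le_mul_of_nonneg_left ?_ (by positivity)
          exact sq_coord_add_mul_norm_sub_sq_le i (hx.trans hy.symm)
      _ ≤ (n + 1) * (4 * ((n + 1) * m ^ 2)) := by
          gcongr
          · exact norm_add_sq_le_four hx hy
          · exact h_sum.trans (by gcongr; linarith)
      _ = 4 * ((n + 1) * m) ^ 2 := by ring
  exact (sq_le_sq₀ dist_nonneg (by positivity)).1 (by linarith)

lemma hausdorffMeasure_sphere_patch_le (i : Fin (n + 1)) {T : Fin (n + 1) → Set ℝ}
    {s : Set (EuclideanSpace ℝ (Fin (n + 1)))} (hs : ∀ x ∈ s, ‖x‖ = 1)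
    (hsT : ∀ x ∈ s, ∀ j, x j ∈ T j) (h_large : ∀ x ∈ s, 1 ≤ (n + 1) * x i ^ 2)
    (h_sign : ∀ x ∈ s, ∀ y ∈ s, 0 ≤ x i * y i) :
    μH[n] s ≤ (n + 1) ^ n * ∏ j, volume (T (i.succAbove j)) := by
  let p (x : EuclideanSpace ℝ (Fin (n + 1))) : Fin n → ℝ := i.removeNth x
  have h_anti : AntilipschitzWith (n + 1) (s.domRestrict p) :=
    AntilipschitzWith.of_le_mul_dist fun ⟨x, hx⟩ ⟨y, hy⟩ =>
      dist_le_mul_dist_removeNth i (hs x hx) (hs y hy) (h_large x hx) (h_large y hy)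
        (h_sign x hx y hy)
  have h_image : p '' s ⊆ univ.pi fun j => T (i.succAbove j) := by
    rintro _ ⟨x, hx, rfl⟩ j -
    exact hsT x hx _
  calc μH[n] s ≤ (n + 1) ^ n * μH[n] (p '' s) := by
        simpa using hausdorffMeasure_le_of_antilipschitzWith_domRestrict h_anti n.cast_nonneg
    _ ≤ (n + 1) ^ n * μH[n] (univ.pi fun j => T (i.succAbove j)) := by gcongr
    _ = (n + 1) ^ n * ∏ j, volume (T (i.succAbove j)) := by
        rw [← volume_pi_pi, ← hausdorffMeasure_pi_real, Fintype.card_fin]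

lemma exists_one_le_mul_coord_sq {x : EuclideanSpace ℝ (Fin (n + 1))} (hx : ‖x‖ = 1) :
    ∃ i, 1 ≤ (n + 1) * x i ^ 2 := by
  have h_sum : ∑ _i : Fin (n + 1), (1 : ℝ) ≤ ∑ i, (n + 1) * x i ^ 2 := by
    simp [← Finset.mul_sum, ← EuclideanSpace.real_norm_sq_eq, hx]
  obtain ⟨i, -, hi⟩ := Finset.exists_le_of_sum_le Finset.univ_nonempty h_sum
  exact ⟨i, hi⟩

lemma hausdorffMeasure_sphere_inter_box_le (T : Fin (n + 1) → Set ℝ) :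
    μH[n] {x : EuclideanSpace ℝ (Fin (n + 1)) | ‖x‖ = 1 ∧ ∀ j, x j ∈ T j} ≤
      2 * (n + 1) ^ n * ∑ i : Fin (n + 1), ∏ j, volume (T (i.succAbove j)) := by
  set A := {x : EuclideanSpace ℝ (Fin (n + 1)) | ‖x‖ = 1 ∧ ∀ j, x j ∈ T j}
  let P (i : Fin (n + 1)) (I : Set ℝ) := A ∩ {x | 1 ≤ (n + 1) * x i ^ 2 ∧ x i ∈ I}
  have h_cover : A ⊆ ⋃ i, P i (Ici 0) ∪ P i (Iic 0) := fun x hx => by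
    obtain ⟨i, hi⟩ := exists_one_le_mul_coord_sq hx.1
    exact mem_iUnion.2 ⟨i, (le_total 0 (x i)).imp (⟨hx, hi, ·⟩) (⟨hx, hi, ·⟩)⟩
  have h_patch (i : Fin (n + 1)) {I : Set ℝ} (hI : ∀ s ∈ I, ∀ t ∈ I, 0 ≤ s * t) :
      μH[n] (P i I) ≤ (n + 1) ^ n * ∏ j, volume (T (i.succAbove j)) :=
    hausdorffMeasure_sphere_patch_le i (fun x hx => hx.1.1) (fun x hx => hx.1.2)
      (fun x hx => hx.2.1) (fun x hx y hy => hI _ hx.2.2 _ hy.2.2)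
  calc μH[n] A ≤ ∑ i : Fin (n + 1), μH[n] (P i (Ici 0) ∪ P i (Iic 0)) :=
        (measure_mono h_cover).trans (measure_iUnion_fintype_le _ _)
    _ ≤ ∑ i : Fin (n + 1), 2 * ((n + 1) ^ n * ∏ j, volume (T (i.succAbove j))) := by
        refine Finset.sum_le_sum fun i _ => (measure_union_le _ _).trans ?_
        rw [two_mul]
        exact add_le_add (h_patch i fun s hs t ht => mul_nonneg hs ht)
          (h_patch i fun s hs t ht => mul_nonneg_of_nonpos_of_nonpos hs ht)
    _ = 2 * (n + 1) ^ n * ∑ i : Fin (n + 1), ∏ j, volume (T (i.succAbove j)) := by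
        simp only [Finset.mul_sum, mul_assoc]

variable {ε : ℝ}

lemma abs_coord_sq_sub_coord_sq_le {x y : EuclideanSpace ℝ (Fin (n + 1))} (hx : ‖x‖ = 1)
    (hy : ‖y‖ = 1) (hε : 0 ≤ ε) (h : ∑ j : Fin n, (x j.succ - y j.succ) ^ 2 ≤ ε ^ 2)
    (l : Fin (n + 1)) : |x l ^ 2 - y l ^ 2| ≤ 2 * ε := by
  have h_coord (z : EuclideanSpace ℝ (Fin (n + 1))) : z l ^ 2 ≤ ‖z‖ ^ 2 := by
    rw [norm_sq_eq_coord_sq_add_sum_succAbove l]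
    exact le_add_of_nonneg_right (by positivity)
  have h_prod : (x l + y l) ^ 2 * (x l - y l) ^ 2 ≤
      ‖x + y‖ ^ 2 * ∑ j : Fin n, (x j.succ - y j.succ) ^ 2 := by
    cases l using Fin.cases with
    | zero =>
      calc (x 0 + y 0) ^ 2 * (x 0 - y 0) ^ 2 ≤ (x 0 + y 0) ^ 2 * ‖x - y‖ ^ 2 :=
            mul_le_mul_of_nonneg_left (h_coord (x - y)) (sq_nonneg _)
        _ ≤ ‖x + y‖ ^ 2 * ∑ j : Fin n, (x j.succ - y j.succ) ^ 2 :=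
            sq_coord_add_mul_norm_sub_sq_le 0 (hx.trans hy.symm)
    | succ j =>
      exact mul_le_mul (h_coord (x + y))
        (Finset.single_le_sum (f := fun j : Fin n => (x j.succ - y j.succ) ^ 2)
          (fun _ _ => sq_nonneg _) (Finset.mem_univ j)) (sq_nonneg _) (sq_nonneg _)
  refine abs_le_of_sq_le_sq ?_ (by positivity)
  calc (x l ^ 2 - y l ^ 2) ^ 2 = (x l + y l) ^ 2 * (x l - y l) ^ 2 := by rw [sq_sub_sq, mul_pow]
    _ ≤ ‖x + y‖ ^ 2 * ∑ j : Fin n, (x j.succ - y j.succ) ^ 2 := h_prod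
    _ ≤ 4 * ε ^ 2 := by gcongr; exact norm_add_sq_le_four hx hy
    _ = (2 * ε) ^ 2 := by ring

/-- The values left to the `l`-th coordinate of a point of the unit sphere whose distance to the
line through `q` parallel to axis `0` is at most `ε`. -/
def cylinderCoordSet (q : EuclideanSpace ℝ (Fin (n + 1))) (ε : ℝ) (l : Fin (n + 1)) : Set ℝ :=
  {z | |z ^ 2 - q l ^ 2| ≤ 2 * ε ∧ (l ≠ 0 → |z - q l| ≤ ε)}

lemma coord_mem_cylinderCoordSet {x q : EuclideanSpace ℝ (Fin (n + 1))} (hx : ‖x‖ = 1)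
    (hq : ‖q‖ = 1) (hε : 0 ≤ ε) (h : ∑ j : Fin n, (x j.succ - q j.succ) ^ 2 ≤ ε ^ 2)
    (l : Fin (n + 1)) : x l ∈ cylinderCoordSet q ε l := by
  refine ⟨abs_coord_sq_sub_coord_sq_le hx hq hε h l, fun hl => abs_le_of_sq_le_sq ?_ hε⟩
  obtain ⟨j, rfl⟩ := Fin.exists_succ_eq_of_ne_zero hl
  exact (Finset.single_le_sum (f := fun j : Fin n => (x j.succ - q j.succ) ^ 2)
    (fun _ _ => sq_nonneg _) (Finset.mem_univ j)).trans h

lemma volume_cylinderCoordSet_le_sqrt (q : EuclideanSpace ℝ (Fin (n + 1))) (ε : ℝ)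
    (l : Fin (n + 1)) : volume (cylinderCoordSet q ε l) ≤ ENNReal.ofReal (4 * √ε) := by
  have h_sqrt : 2 * √(2 * (2 * ε)) = 4 * √ε := by
    rw [← mul_assoc, ← sq, sqrt_mul (sq_nonneg 2), sqrt_sq zero_le_two]
    ring
  exact (measure_mono fun _ hz => hz.1).trans
    (h_sqrt ▸ volume_setOf_abs_sq_sub_le (q l ^ 2) (2 * ε))

lemma volume_cylinderCoordSet_le (q : EuclideanSpace ℝ (Fin (n + 1))) (ε : ℝ) {l : Fin (n + 1)}
    (hl : l ≠ 0) : volume (cylinderCoordSet q ε l) ≤ ENNReal.ofReal (2 * ε) :=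
  (measure_mono fun _ hz => hz.2 hl).trans_eq (Real.volume_closedBall (q l) ε)

lemma prod_volume_cylinderCoordSet_succAbove_le (q : EuclideanSpace ℝ (Fin (n + 2))) (hε : 0 ≤ ε)
    (i : Fin (n + 2)) :
    ∏ j, volume (cylinderCoordSet q ε (i.succAbove j)) ≤
      ENNReal.ofReal (4 * √ε * (2 * ε) ^ n) := by
  have h_ne (j : Fin n) : i.succAbove j.succ ≠ 0 := (i.succAbove_pos _ j.succ_pos).ne'
  rw [Fin.prod_univ_succ, ENNReal.ofReal_mul (by positivity), ENNReal.ofReal_pow (by positivity)]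
  refine mul_le_mul' (volume_cylinderCoordSet_le_sqrt q ε _) ?_
  simpa using Finset.prod_le_pow_card Finset.univ _ _
    fun j _ => volume_cylinderCoordSet_le q ε (h_ne j)

lemma hausdorffMeasure_sphere_inter_cylinder_le {q : EuclideanSpace ℝ (Fin (n + 2))}
    (hq : ‖q‖ = 1) (hε : 0 ≤ ε) :
    μH[n + 1] {x : EuclideanSpace ℝ (Fin (n + 2)) |
        ‖x‖ = 1 ∧ ∑ j : Fin (n + 1), (x j.succ - q j.succ) ^ 2 ≤ ε ^ 2} ≤
      ENNReal.ofReal (2 * (n + 2) ^ (n + 2) * (4 * √ε * (2 * ε) ^ n)) := by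
  calc μH[n + 1] {x : EuclideanSpace ℝ (Fin (n + 2)) |
        ‖x‖ = 1 ∧ ∑ j : Fin (n + 1), (x j.succ - q j.succ) ^ 2 ≤ ε ^ 2}
      ≤ μH[n + 1] {x : EuclideanSpace ℝ (Fin (n + 2)) |
          ‖x‖ = 1 ∧ ∀ l, x l ∈ cylinderCoordSet q ε l} :=
        measure_mono fun x hx => ⟨hx.1, coord_mem_cylinderCoordSet hx.1 hq hε hx.2⟩
    _ ≤ 2 * (n + 2) ^ (n + 1) *
          ∑ i : Fin (n + 2), ∏ j, volume (cylinderCoordSet q ε (i.succAbove j)) := by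
        have h_cast : (n : ENNReal) + 1 + 1 = n + 2 := by rw [add_assoc, one_add_one_eq_two]
        simpa only [Nat.cast_succ, h_cast] using
          hausdorffMeasure_sphere_inter_box_le (cylinderCoordSet q ε)
    _ ≤ 2 * (n + 2) ^ (n + 1) *
          ∑ _i : Fin (n + 2), ENNReal.ofReal (4 * √ε * (2 * ε) ^ n) := by
        gcongr with i
        exact prod_volume_cylinderCoordSet_succAbove_le q hε i
    _ = 2 * (n + 2) ^ (n + 2) * ENNReal.ofReal (4 * √ε * (2 * ε) ^ n) := by
        rw [Finset.sum_const, Finset.card_univ, Fintype.card_fin, nsmul_eq_mul]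
        push_cast
        ring
    _ = ENNReal.ofReal (2 * (n + 2) ^ (n + 2) * (4 * √ε * (2 * ε) ^ n)) := by
        have h_const : ENNReal.ofReal (2 * (n + 2) ^ (n + 2)) = 2 * (n + 2) ^ (n + 2) := by
          exact_mod_cast ENNReal.ofReal_natCast (2 * (n + 2) ^ (n + 2))
        rw [ENNReal.ofReal_mul (p := 2 * (n + 2) ^ (n + 2)) (by positivity), h_const]

end Sphere

section InnerProductSpace

variable {F : Type*} [NormedAddCommGroup F] [InnerProductSpace ℝ F]

lemma exists_orthonormalBasis_apply_eq {ι : Type*} [Fintype ι] [FiniteDimensional ℝ F]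
    (hι : Module.finrank ℝ F = Fintype.card ι) (i : ι) {b : F} (hb : ‖b‖ = 1) :
    ∃ B : OrthonormalBasis ι ℝ F, B i = b := by
  have h_orth : Orthonormal ℝ (({i} : Set ι).domRestrict fun _ => b) :=
    ⟨fun _ => hb, fun j k hjk => (hjk (Subsingleton.elim j k)).elim⟩
  obtain ⟨B, hB⟩ := h_orth.exists_orthonormalBasis_extension_of_card_eq hι
  exact ⟨B, hB i rfl⟩

lemma norm_starProjection_orthogonal_span_singleton_sq {b : F} (hb : ‖b‖ = 1) (v : F) :
    ‖(ℝ ∙ b)ᗮ.starProjection v‖ ^ 2 = ‖v‖ ^ 2 - inner ℝ b v ^ 2 := by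
  rw [Submodule.norm_sq_eq_add_norm_sq_starProjection v (ℝ ∙ b),
    Submodule.starProjection_unit_singleton ℝ hb, norm_smul, hb, mul_one, norm_eq_abs, sq_abs,
    add_sub_cancel_left]

lemma norm_starProjection_orthogonal_span_basis_zero_sq {n : ℕ}
    (B : OrthonormalBasis (Fin (n + 1)) ℝ F) (v : F) :
    ‖(ℝ ∙ B 0)ᗮ.starProjection v‖ ^ 2 = ∑ j : Fin n, B.repr v j.succ ^ 2 := by
  rw [norm_starProjection_orthogonal_span_singleton_sq (B.orthonormal.norm_eq_one 0),
    ← B.repr.norm_map v, EuclideanSpace.real_norm_sq_eq, Fin.sum_univ_succ, B.repr_apply_apply,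
    add_sub_cancel_left]

theorem sphere_cap_bound_general {n : ℕ} [MeasurableSpace F] [BorelSpace F]
    (hF : Module.finrank ℝ F = n + 2) :
    ∃ C : ℝ, ∀ a b : F, ‖a‖ = 1 → ‖b‖ = 1 → ∀ ε : ℝ, 0 ≤ ε →
      μH[n + 1] {c : F | ‖c‖ = 1 ∧ ‖(ℝ ∙ b)ᗮ.starProjection (a - c)‖ ≤ ε} ≤
        ENNReal.ofReal (C * ε ^ (n + 1 / 2 : ℝ)) := by
  have : FiniteDimensional ℝ F := .of_finrank_pos (by omega)
  refine ⟨2 * (n + 2) ^ (n + 2) * (4 * 2 ^ n), fun a b ha hb ε hε => ?_⟩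
  obtain ⟨B, rfl⟩ := exists_orthonormalBasis_apply_eq (hF.trans (Fintype.card_fin _).symm) 0 hb
  have h_cylinder := hausdorffMeasure_sphere_inter_cylinder_le ((B.repr.norm_map a).trans ha) hε
  rw [← B.repr.toIsometryEquiv.hausdorffMeasure_preimage] at h_cylinder
  have h_pow : ε ^ (n + 1 / 2 : ℝ) = √ε * ε ^ n := by
    rw [rpow_add_of_nonneg hε n.cast_nonneg (by norm_num), rpow_natCast, ← sqrt_eq_rpow, mul_comm]
  calc μH[n + 1] {c : F | ‖c‖ = 1 ∧ ‖(ℝ ∙ B 0)ᗮ.starProjection (a - c)‖ ≤ ε}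
      ≤ ENNReal.ofReal (2 * (n + 2) ^ (n + 2) * (4 * √ε * (2 * ε) ^ n)) := by
        refine le_trans (measure_mono ?_) h_cylinder
        intro c hc
        refine ⟨(B.repr.norm_map c).trans hc.1, ?_⟩
        have h_proj := pow_le_pow_left₀ (norm_nonneg _) hc.2 2
        rw [norm_starProjection_orthogonal_span_basis_zero_sq] at h_proj
        simpa [sub_sq_comm] using h_proj
    _ = ENNReal.ofReal (2 * (n + 2) ^ (n + 2) * (4 * 2 ^ n) * ε ^ (n + 1 / 2 : ℝ)) := by
        rw [h_pow]
        ring_nf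

end InnerProductSpace

lemma norm_cross3_sq (u v : E3) : ‖cross3 u v‖ ^ 2 = ‖u‖ ^ 2 * ‖v‖ ^ 2 - inner ℝ v u ^ 2 := by
  simp [EuclideanSpace.real_norm_sq_eq, PiLp.inner_apply, cross3, Fin.sum_univ_three]
  ring

lemma norm_cross3_eq_norm_starProjection {b : E3} (hb : ‖b‖ = 1) (v : E3) :
    ‖cross3 v b‖ = ‖(ℝ ∙ b)ᗮ.starProjection v‖ := by
  rw [← sq_eq_sq₀ (norm_nonneg _) (norm_nonneg _), norm_cross3_sq, hb, one_pow, mul_one,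
    norm_starProjection_orthogonal_span_singleton_sq hb]

/-- For unit vectors `a, b` the set `{c ∈ 𝕊² : |(a-c) × b| ≤ ε}` has 2-dimensional
surface (Hausdorff) measure at most `C ε^{3/2}`. -/
theorem sphere_cap_bound :
    ∃ C : ℝ, ∀ a b : E3, ‖a‖ = 1 → ‖b‖ = 1 → ∀ ε ∈ Set.Ioo (0 : ℝ) 1,
      μH[2] {c : E3 | ‖c‖ = 1 ∧ ‖cross3 (a - c) b‖ ≤ ε} ≤
        ENNReal.ofReal (C * ε ^ ((3 : ℝ) / 2)) := by
  obtain ⟨C, hC⟩ := sphere_cap_bound_general (F := E3) (n := 1) finrank_euclideanSpace_fin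
  rw [Nat.cast_one, one_add_one_eq_two, show (1 : ℝ) + 1 / 2 = 3 / 2 by norm_num] at hC
  refine ⟨C, fun a b ha hb ε hε => ?_⟩
  simpa only [norm_cross3_eq_norm_starProjection hb] using hC a b ha hb ε hε.1.le
end
end

section
/- There is an absolute constant $C$ with the following property. Let $g : \mathbb{R}^3 \to [0,\infty)$ be integrable and invariant under all rotations about the $x_3$-axis, i.e. $g(R_\theta y) = g(y)$ for all $\theta$, where $R_\theta(y_1,y_2,y_3) = (y_1\cos\theta - y_2\sin\theta,\, y_1\sin\theta + y_2\cos\theta,\, y_3)$. Then for every $x \in \mathbb{R}^3$ and every $R > 0$ with $|\slashed x| \ge 2R$, where $\slashed x := (x_1, x_2)$: $\int_{\{y : |y| \le R\}} g(x - y)\,dy \;\le\; \frac{C R}{|\slashed x|} \int_{\mathbb{R}^3} g(y)\,dy$. -/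
open MeasureTheory Real Set
noncomputable section

/-- Rotation by angle `θ` about the `x₃`-axis. -/
def rotZ (θ : ℝ) (x : E3) : E3 :=
  !₂[x 0 * Real.cos θ - x 1 * Real.sin θ, x 0 * Real.sin θ + x 1 * Real.cos θ, x 2]

/-!
If `N R < |x̸|`, then the balls of radius `R` about the `N` points obtained by rotating `x` through
the angles `π k / N`, `0 ≤ k < N`, are disjoint, because two of these points are at least
`2 |x̸| / N` apart. The balls all have the same mass, so each has at most the fraction `1 / N` of
the total. If `R < |x̸|`, then `N = ⌈|x̸| / (2 R)⌉` is admissible and gives the fraction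
`2 R / |x̸|`; if `R ≥ |x̸|`, this fraction exceeds `1`.
-/

section Measure

variable {α β ι : Type*}

theorem measurePreserving_withDensity [MeasurableSpace α] [MeasurableSpace β] {μ : Measure α}
    {ν : Measure β} {f : α → β} (hf : MeasurePreserving f μ ν) (hemb : MeasurableEmbedding f)
    (ρ : β → ENNReal) :
    MeasurePreserving f (μ.withDensity (ρ ∘ f)) (ν.withDensity ρ) := by
  refine ⟨hf.measurable, Measure.ext fun s hs => ?_⟩
  rw [Measure.map_apply hf.measurable hs, withDensity_apply _ (hf.measurable hs),
    withDensity_apply _ hs]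
  exact hf.setLIntegral_comp_preimage_emb hemb ρ s

theorem measureReal_withDensity_ofReal [MeasurableSpace α] {μ : Measure α} {g : α → ℝ}
    {s : Set α} (hs : MeasurableSet s) (hint : IntegrableOn g s μ)
    (hpos : 0 ≤ᵐ[μ.restrict s] g) :
    (μ.withDensity fun y => ENNReal.ofReal (g y)).real s = ∫ y in s, g y ∂μ := by
  rw [measureReal_def, withDensity_apply _ hs, ← ofReal_integral_eq_lintegral_ofReal hint hpos,
    ENNReal.toReal_ofReal (integral_nonneg_of_ae hpos)]

theorem card_mul_measureReal_closedBall_le [Fintype ι] [PseudoMetricSpace α] [MeasurableSpace α]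
    [OpensMeasurableSpace α] {μ : Measure α} [IsFiniteMeasure μ] {f : ι → α → α}
    (hiso : ∀ i, Isometry (f i)) (hf : ∀ i, MeasurePreserving (f i) μ μ) {x : α} {R : ℝ}
    (hdisj : Pairwise (Function.onFun Disjoint fun i => Metric.closedBall (f i x) R)) :
    Fintype.card ι * μ.real (Metric.closedBall x R) ≤ μ.real univ := by
  have hball (i : ι) : MeasurableSet (Metric.closedBall (f i x) R) :=
    Metric.isClosed_closedBall.measurableSet
  have hmass (i : ι) :
      μ.real (Metric.closedBall (f i x) R) = μ.real (Metric.closedBall x R) := by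
    rw [← (hf i).measureReal_preimage (hball i).nullMeasurableSet, (hiso i).preimage_closedBall]
  calc Fintype.card ι * μ.real (Metric.closedBall x R)
      = ∑ i, μ.real (Metric.closedBall (f i x) R) := by simp [hmass]
    _ ≤ μ.real univ :=
      sum_measureReal_le_measureReal_univ (fun i _ => hball i) (hdisj.set_pairwise _)

theorem setIntegral_norm_le_comp_sub_left {E F : Type*} [NormedAddCommGroup E]
    [MeasurableSpace E] [BorelSpace E] [NormedAddCommGroup F] [NormedSpace ℝ F]
    (μ : Measure E) [μ.IsAddLeftInvariant] [μ.IsNegInvariant] (g : E → F) (x : E) (R : ℝ) :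
    ∫ y in {y : E | ‖y‖ ≤ R}, g (x - y) ∂μ = ∫ y in Metric.closedBall x R, g y ∂μ := by
  have hpre : (fun y => x - y) ⁻¹' Metric.closedBall x R = {y : E | ‖y‖ ≤ R} := by
    ext y
    simp
  rw [← hpre]
  exact (Measure.measurePreserving_sub_left μ x).setIntegral_preimage_emb
    (Homeomorph.subLeft x).measurableEmbedding g _

end Measure

theorem rotZ_rotZ (θ φ : ℝ) (x : E3) : rotZ θ (rotZ φ x) = rotZ (θ + φ) x := by
  ext i
  fin_cases i <;> simp [rotZ, Real.cos_add, Real.sin_add] <;> ring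

theorem rotZ_zero (x : E3) : rotZ 0 x = x := by
  ext i
  fin_cases i <;> simp [rotZ]

theorem norm_rotZ (θ : ℝ) (x : E3) : ‖rotZ θ x‖ = ‖x‖ := by
  simp only [EuclideanSpace.norm_eq, Fin.sum_univ_three, Real.norm_eq_abs, sq_abs]
  congr 1
  simp only [rotZ, PiLp.toLp_apply, Matrix.cons_val]
  linear_combination (x 0 ^ 2 + x 1 ^ 2) * Real.sin_sq_add_cos_sq θ

/-- Rotation about the `x₃`-axis as a linear isometric automorphism of `ℝ³`, which is the form in
which it is known to preserve Lebesgue measure. -/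
def rotZIsometry (θ : ℝ) : E3 ≃ₗᵢ[ℝ] E3 where
  toFun := rotZ θ
  invFun := rotZ (-θ)
  left_inv x := by rw [rotZ_rotZ, neg_add_cancel, rotZ_zero]
  right_inv x := by rw [rotZ_rotZ, add_neg_cancel, rotZ_zero]
  map_add' x y := by
    ext i
    fin_cases i <;> simp [rotZ] <;> ring
  map_smul' c x := by
    ext i
    fin_cases i <;> simp [rotZ] <;> ring
  norm_map' := norm_rotZ θ

theorem isometry_rotZ (θ : ℝ) : Isometry (rotZ θ) :=
  (rotZIsometry θ).isometry

theorem measurePreserving_rotZ (θ : ℝ) : MeasurePreserving (rotZ θ) :=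
  (rotZIsometry θ).measurePreserving

theorem measurePreserving_rotZ_withDensity {ρ : E3 → ENNReal} {θ : ℝ}
    (hρ : ∀ y, ρ (rotZ θ y) = ρ y) :
    MeasurePreserving (rotZ θ) (volume.withDensity ρ) (volume.withDensity ρ) := by
  have hcomp : ρ ∘ rotZ θ = ρ := funext hρ
  have hmap := measurePreserving_withDensity (measurePreserving_rotZ θ)
    (rotZIsometry θ).toHomeomorph.measurableEmbedding ρ
  rwa [hcomp] at hmap

/-- The distance `|x̸| = |(x₁, x₂)|` of a point of `ℝ³` to the `x₃`-axis. -/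
def axisDist (x : E3) : ℝ :=
  Real.sqrt (x 0 ^ 2 + x 1 ^ 2)

theorem axisDist_nonneg (x : E3) : 0 ≤ axisDist x :=
  Real.sqrt_nonneg _

theorem dist_rotZ_rotZ (θ φ : ℝ) (x : E3) :
    dist (rotZ θ x) (rotZ φ x) = 2 * |Real.sin ((θ - φ) / 2)| * axisDist x := by
  have hsq : (2 * |Real.sin ((θ - φ) / 2)| * axisDist x) ^ 2 =
      2 * (1 - Real.cos (θ - φ)) * (x 0 ^ 2 + x 1 ^ 2) := by
    rw [mul_pow, mul_pow, sq_abs, Real.sin_sq_eq_half_sub, mul_div_cancel₀ _ two_ne_zero,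
      axisDist, Real.sq_sqrt (by positivity)]
    ring
  refine (sq_eq_sq₀ dist_nonneg (mul_nonneg (by positivity) (axisDist_nonneg x))).1 ?_
  rw [hsq, EuclideanSpace.dist_sq_eq, Real.cos_sub]
  simp only [Fin.sum_univ_three, Real.dist_eq, sq_abs, rotZ, PiLp.toLp_apply, Matrix.cons_val]
  linear_combination (x 0 ^ 2 + x 1 ^ 2) *
    (Real.sin_sq_add_cos_sq θ + Real.sin_sq_add_cos_sq φ)

theorem two_div_pi_mul_abs_sub_mul_axisDist_le_dist_rotZ {θ φ : ℝ} (h : |θ - φ| ≤ π) (x : E3) :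
    2 / π * |θ - φ| * axisDist x ≤ dist (rotZ θ x) (rotZ φ x) := by
  have hhalf : |(θ - φ) / 2| = |θ - φ| / 2 := by rw [abs_div, abs_two]
  have hsin : 2 / π * |(θ - φ) / 2| ≤ |Real.sin ((θ - φ) / 2)| :=
    Real.mul_abs_le_abs_sin (by linarith)
  have hr := axisDist_nonneg x
  calc 2 / π * |θ - φ| * axisDist x
      = 2 * (2 / π * |(θ - φ) / 2|) * axisDist x := by
        rw [hhalf]
        ring
    _ ≤ 2 * |Real.sin ((θ - φ) / 2)| * axisDist x := by gcongr
    _ = dist (rotZ θ x) (rotZ φ x) := (dist_rotZ_rotZ θ φ x).symm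

theorem pairwise_disjoint_closedBall_rotZ {x : E3} {R : ℝ} {N : ℕ} (hN : N * R < axisDist x) :
    Pairwise (Function.onFun Disjoint fun k : Fin N =>
      Metric.closedBall (rotZ (π * k / N) x) R) := by
  intro j k hjk
  have hN_pos : (0 : ℝ) < N := by exact_mod_cast j.pos
  have hangle : |π * j / N - π * k / N| = π / N * |(j : ℝ) - k| := by
    rw [show π * j / N - π * k / N = π / N * ((j : ℝ) - k) by ring, abs_mul,
      abs_of_pos (div_pos pi_pos hN_pos)]
  have hsep : (1 : ℝ) ≤ |(j : ℝ) - k| := by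
    have hjk_int : ((j : ℕ) : ℤ) ≠ (k : ℕ) := by exact_mod_cast Fin.val_ne_of_ne hjk
    exact_mod_cast Int.one_le_abs (sub_ne_zero.2 hjk_int)
  have hspread : |(j : ℝ) - k| ≤ N :=
    abs_sub_le_of_nonneg_of_le (by positivity) (by exact_mod_cast j.is_lt.le) (by positivity)
      (by exact_mod_cast k.is_lt.le)
  have hangle_le : |π * j / N - π * k / N| ≤ π := by
    rw [hangle, div_mul_eq_mul_div, div_le_iff₀ hN_pos]
    gcongr
  refine Metric.closedBall_disjoint_closedBall ?_
  calc R + R < 2 * (1 / N * axisDist x) := by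
        have hR : R < 1 / N * axisDist x := by
          rwa [one_div_mul_eq_div, lt_div_iff₀' hN_pos]
        linarith
    _ ≤ 2 * (|(j : ℝ) - k| / N * axisDist x) := by
        have := axisDist_nonneg x
        gcongr
    _ = 2 / π * |π * j / N - π * k / N| * axisDist x := by
        rw [hangle]
        field_simp
    _ ≤ dist (rotZ (π * j / N) x) (rotZ (π * k / N) x) :=
        two_div_pi_mul_abs_sub_mul_axisDist_le_dist_rotZ hangle_le x

theorem natCast_mul_measureReal_closedBall_le {μ : Measure E3} [IsFiniteMeasure μ]
    (hμ : ∀ θ, MeasurePreserving (rotZ θ) μ μ) {x : E3} {R : ℝ} {N : ℕ}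
    (hN : N * R < axisDist x) :
    N * μ.real (Metric.closedBall x R) ≤ μ.real univ := by
  simpa only [Fintype.card_fin] using card_mul_measureReal_closedBall_le
    (fun _ => isometry_rotZ _) (fun _ => hμ _) (pairwise_disjoint_closedBall_rotZ hN)

theorem cylindrical_mass_bound_general {μ : Measure E3} [IsFiniteMeasure μ]
    (hμ : ∀ θ, MeasurePreserving (rotZ θ) μ μ) {x : E3} (hx : 0 < axisDist x) {R : ℝ}
    (hR : 0 < R) :
    μ.real (Metric.closedBall x R) ≤ 2 * R / axisDist x * μ.real univ := by
  obtain hle | hlt := le_or_gt (axisDist x) R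
  · have hfactor : 1 ≤ 2 * R / axisDist x := (one_le_div hx).2 (by linarith)
    exact (measureReal_mono (subset_univ _)).trans
      (le_mul_of_one_le_left measureReal_nonneg hfactor)
  set N := ⌈axisDist x / (2 * R)⌉₊
  have hN_lt : N * R < axisDist x := by
    have hceil : (N : ℝ) < 2 * (axisDist x / (2 * R)) :=
      Nat.ceil_lt_two_mul (by rw [lt_div_iff₀ (by positivity)]; linarith)
    rwa [← mul_div_assoc, mul_div_mul_left _ _ two_ne_zero, lt_div_iff₀ hR] at hceil
  calc μ.real (Metric.closedBall x R)
      = 2 * R / axisDist x * (axisDist x / (2 * R) * μ.real (Metric.closedBall x R)) := by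
        field_simp
    _ ≤ 2 * R / axisDist x * (N * μ.real (Metric.closedBall x R)) := by
        gcongr
        exact Nat.le_ceil _
    _ ≤ 2 * R / axisDist x * μ.real univ := by
        gcongr
        exact natCast_mul_measureReal_closedBall_le hμ hN_lt

/-- Cylindrical averaging estimate: for an axially symmetric nonnegative integrable
density `g`, the mass in a ball of radius `R` centered at a point at distance
`|x̸| ≥ 2R` from the symmetry axis is at most `C (R/|x̸|)` times the total mass. -/
theorem cylindrical_mass_bound :
    ∃ C : ℝ, ∀ g : E3 → ℝ, Integrable g volume → (∀ y, 0 ≤ g y) →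
      (∀ (θ : ℝ) (y : E3), g (rotZ θ y) = g y) →
      ∀ (x : E3) (R : ℝ), 0 < R → 2 * R ≤ Real.sqrt (x 0 ^ 2 + x 1 ^ 2) →
        (∫ y in {y : E3 | ‖y‖ ≤ R}, g (x - y)) ≤
          C * R / Real.sqrt (x 0 ^ 2 + x 1 ^ 2) * ∫ y, g y := by
  refine ⟨2, fun g hint hpos hg x R hR hx => ?_⟩
  have := isFiniteMeasure_withDensity_ofReal hint.hasFiniteIntegral
  have hbound := cylindrical_mass_bound_general
    (fun θ => measurePreserving_rotZ_withDensity (ρ := fun y => ENNReal.ofReal (g y))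
      fun y => congrArg ENNReal.ofReal (hg θ y))
    ((mul_pos two_pos hR).trans_le hx) hR
  rwa [measureReal_withDensity_ofReal Metric.isClosed_closedBall.measurableSet hint.integrableOn
      (.of_forall hpos), measureReal_withDensity_ofReal .univ hint.integrableOn (.of_forall hpos),
    setIntegral_univ, ← setIntegral_norm_le_comp_sub_left] at hbound
end
end
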